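/- Let (A, {Δ(λ)}) be a split quasi-hereditary algebra over a commutative Noetherian ring R. For each λ ∈ Λ there exists a partial tilting module T(λ) with exact sequences 0 → Δ(λ) → T(λ) → X(λ) → 0 and 0 → Y(λ) → T(λ) → ∇(λ) → 0, where X(λ) is filtered by standard modules Δ(μ) with μ < λ and Y(λ) is filtered by modules ∇(μ) ⊗_R U with μ < λ, U ∈ R-proj. Moreover, the inclusion Δ(λ) → T(λ) is a left F(∇̃)-approximation and the surjection T(λ) → ∇(λ) is a right F(Δ̃)-approximation. -/

import Mathlib

open scoped TensorProduct
open CategoryTheory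

noncomputable section

section Core

variable (R : Type) [CommRing R] (A : Type) [Ring A] [Algebra R A]

/-- The action of `a : A` on an `A`-module as an `R`-linear endomorphism. -/
def actL (M : Type) [AddCommGroup M] [Module R M] [Module A M] [IsScalarTower R A M]
    (a : A) : M →ₗ[R] M where
  toFun m := a • m
  map_add' := smul_add a
  map_smul' r m := (smul_comm r a m).symm

/-- The right `A`-module (i.e. `Aᵐᵒᵖ`-module) structure on the `R`-linear dual of a left
`A`-module `M`, given by `(aᵒᵖ • f) m = f (a • m)`. -/
instance dualModule (M : Type) [AddCommGroup M] [Module R M] [Module A M]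
    [IsScalarTower R A M] : Module Aᵐᵒᵖ (M →ₗ[R] R) where
  smul a f := f.comp (actL R A M a.unop)
  one_smul f := by ext m; show f ((1 : Aᵐᵒᵖ).unop • m) = f m; simp
  mul_smul a b f := by
    ext m
    show f ((a * b).unop • m) = f (b.unop • a.unop • m)
    simp [mul_smul]
  smul_zero a := rfl
  smul_add a f g := rfl
  add_smul a b f := by
    ext m
    show f ((a + b).unop • m) = f (a.unop • m) + f (b.unop • m)
    simp [add_smul]
  zero_smul f := by ext m; show f ((0 : Aᵐᵒᵖ).unop • m) = 0; simp

@[simp] lemma dualModule_smul_apply (M : Type) [AddCommGroup M] [Module R M] [Module A M]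
    [IsScalarTower R A M] (a : Aᵐᵒᵖ) (f : M →ₗ[R] R) (m : M) :
    (a • f) m = f (a.unop • m) := rfl

instance dualTower (M : Type) [AddCommGroup M] [Module R M] [Module A M]
    [IsScalarTower R A M] : IsScalarTower R Aᵐᵒᵖ (M →ₗ[R] R) := by
  constructor
  intro r a f
  ext m
  show f ((r • a).unop • m) = r • f (a.unop • m)
  rw [MulOpposite.unop_smul, smul_assoc, map_smul]

/-- The left `A`-module structure on the `R`-linear dual of a right `A`-module
(i.e. an `Aᵐᵒᵖ`-module) `M`, given by `(a • f) m = f (aᵒᵖ • m)`. -/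
instance dualModule' (M : Type) [AddCommGroup M] [Module R M] [Module Aᵐᵒᵖ M]
    [IsScalarTower R Aᵐᵒᵖ M] : Module A (M →ₗ[R] R) where
  smul a f := f.comp (actL R Aᵐᵒᵖ M (MulOpposite.op a))
  one_smul f := by ext m; show f (MulOpposite.op (1 : A) • m) = f m; simp
  mul_smul a b f := by
    ext m
    show f (MulOpposite.op (a * b) • m) = f (MulOpposite.op b • MulOpposite.op a • m)
    rw [MulOpposite.op_mul, mul_smul]
  smul_zero a := rfl
  smul_add a f g := rfl
  add_smul a b f := by
    ext m
    show f (MulOpposite.op (a + b) • m) = f (MulOpposite.op a • m) + f (MulOpposite.op b • m)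
    rw [MulOpposite.op_add, add_smul, map_add]
  zero_smul f := by ext m; show f (MulOpposite.op (0 : A) • m) = 0; simp

@[simp] lemma dualModule'_smul_apply (M : Type) [AddCommGroup M] [Module R M] [Module Aᵐᵒᵖ M]
    [IsScalarTower R Aᵐᵒᵖ M] (a : A) (f : M →ₗ[R] R) (m : M) :
    (a • f) m = f (MulOpposite.op a • m) := rfl

instance dualTower' (M : Type) [AddCommGroup M] [Module R M] [Module Aᵐᵒᵖ M]
    [IsScalarTower R Aᵐᵒᵖ M] : IsScalarTower R A (M →ₗ[R] R) := by
  constructor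
  intro r a f
  ext m
  show f (MulOpposite.op (r • a) • m) = r • f (MulOpposite.op a • m)
  rw [MulOpposite.op_smul, smul_assoc, map_smul]

variable (Λ : Type) [Fintype Λ] [PartialOrder Λ]

/-- Data witnessing that `X` is isomorphic to `Δ(λ) ⊗_R U` for some `λ ∈ S` and some finitely
generated projective `R`-module `U`. -/
structure TensorFactor (Δ : Λ → Type) [∀ l, AddCommGroup (Δ l)] [∀ l, Module R (Δ l)]
    [∀ l, Module A (Δ l)] [∀ l, IsScalarTower R A (Δ l)]
    (S : Set Λ) (X : Type) [AddCommGroup X] [Module A X] : Type 1 where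
  lam : Λ
  mem : lam ∈ S
  U : ModuleCat.{0} R
  fin : Module.Finite R U
  proj : Module.Projective R U
  iso : X ≃ₗ[A] (TensorProduct R (Δ lam) U)

/-- `M` belongs to `F(Δ̃_S)`: it is a finitely generated `A`-module with a finite filtration
whose factors are of the form `Δ(λ) ⊗_R U`, `λ ∈ S`, `U` a finitely generated projective
`R`-module. -/
def InFilt (Δ : Λ → Type) [∀ l, AddCommGroup (Δ l)] [∀ l, Module R (Δ l)]
    [∀ l, Module A (Δ l)] [∀ l, IsScalarTower R A (Δ l)]
    (S : Set Λ) (M : Type) [AddCommGroup M] [Module A M] : Prop :=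
  Module.Finite A M ∧
  ∃ (n : ℕ) (c : Fin (n + 1) → Submodule A M), c 0 = ⊥ ∧ c (Fin.last n) = ⊤ ∧ Monotone c ∧
    ∀ i : Fin n, Nonempty (TensorFactor R A Λ Δ S
      (↥(c i.succ) ⧸ (Submodule.comap (c i.succ).subtype (c i.castSucc))))

/-- Data witnessing that `X` is isomorphic to `F(λ)` for some `λ ∈ S`. -/
structure PlainFactor (F : Λ → Type) [∀ l, AddCommGroup (F l)] [∀ l, Module A (F l)]
    (S : Set Λ) (X : Type) [AddCommGroup X] [Module A X] : Type 1 where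
  lam : Λ
  mem : lam ∈ S
  iso : X ≃ₗ[A] F lam

/-- `M` has a finite filtration with factors among the modules `F(λ)`, `λ ∈ S`. -/
def InFiltPlain (F : Λ → Type) [∀ l, AddCommGroup (F l)] [∀ l, Module A (F l)]
    (S : Set Λ) (M : Type) [AddCommGroup M] [Module A M] : Prop :=
  Module.Finite A M ∧
  ∃ (n : ℕ) (c : Fin (n + 1) → Submodule A M), c 0 = ⊥ ∧ c (Fin.last n) = ⊤ ∧ Monotone c ∧
    ∀ i : Fin n, Nonempty (PlainFactor A Λ F S
      (↥(c i.succ) ⧸ (Submodule.comap (c i.succ).subtype (c i.castSucc))))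

/-- `X` is a direct summand of `Y` (as `A`-modules). -/
def IsDirectSummand (X Y : Type) [AddCommGroup X] [Module A X] [AddCommGroup Y]
    [Module A Y] : Prop :=
  ∃ (i : X →ₗ[A] Y) (p : Y →ₗ[A] X), p.comp i = LinearMap.id

/-- `X` belongs to the additive closure `add T`. -/
def InAdd (T : Type) [AddCommGroup T] [Module A T] (X : Type) [AddCommGroup X]
    [Module A X] : Prop :=
  ∃ n : ℕ, IsDirectSummand A X (Fin n → T)

/-- A split quasi-hereditary structure on the `R`-algebra `A` with standard modules
`Δ(λ)`, `λ ∈ Λ` (following Rouquier's module-theoretic definition). -/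
structure SplitQH (Δ : Λ → Type) [∀ l, AddCommGroup (Δ l)] [∀ l, Module R (Δ l)]
    [∀ l, Module A (Δ l)] [∀ l, IsScalarTower R A (Δ l)] : Type 1 where
  algFin : Module.Finite R A
  algProj : Module.Projective R A
  deltaFinA : ∀ l, Module.Finite A (Δ l)
  deltaFinR : ∀ l, Module.Finite R (Δ l)
  deltaProjR : ∀ l, Module.Projective R (Δ l)
  hom_le : ∀ l m : Λ, (∃ f : Δ l →ₗ[A] Δ m, f ≠ 0) → l ≤ m
  endIso : ∀ l, Nonempty ((Module.End A (Δ l)) ≃ₐ[R] R)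
  P : Λ → ModuleCat.{0} A
  P_proj : ∀ l, Module.Projective A (P l)
  P_fin : ∀ l, Module.Finite A (P l)
  epi : ∀ l, (P l : Type) →ₗ[A] Δ l
  epi_surj : ∀ l, Function.Surjective (epi l)
  ker_filt : ∀ l, InFilt R A Λ Δ {m | l < m} ↥(LinearMap.ker (epi l))
  add_gen : ∀ (Q : ModuleCat.{0} A), Module.Finite A Q → Module.Projective A Q →
    InAdd A (∀ l, (P l : Type)) Q

/-- Vanishing of `Ext^i_A(M, N)` (computed in the abelian category of `A`-modules). -/
def extVanish (M : Type) [AddCommGroup M] [Module A M] (N : Type) [AddCommGroup N]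
    [Module A N] (i : ℕ) : Prop :=
  Subsingleton (((Ext ℤ (ModuleCat.{0} A) i).obj
    (Opposite.op (ModuleCat.of A M))).obj (ModuleCat.of A N))

/-- `∇` is a family of costandard modules for the split quasi-hereditary algebra
`(A, {Δ(λ)})`: the `R`-linear duals `D∇(λ)` make `A^op` split quasi-hereditary (with the same
poset), and the `Ext`-orthogonality relations with the standard modules hold. -/
def IsCostandard (Δ : Λ → Type) [∀ l, AddCommGroup (Δ l)] [∀ l, Module R (Δ l)]
    [∀ l, Module A (Δ l)] [∀ l, IsScalarTower R A (Δ l)]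
    (N : Λ → Type) [∀ l, AddCommGroup (N l)] [∀ l, Module R (N l)]
    [∀ l, Module A (N l)] [∀ l, IsScalarTower R A (N l)] : Prop :=
  Nonempty (SplitQH R Aᵐᵒᵖ Λ (fun l => (N l →ₗ[R] R))) ∧
  (∀ l, Nonempty ((Δ l →ₗ[A] N l) ≃ₗ[R] R)) ∧
  (∀ l m, l ≠ m → ∀ f : Δ l →ₗ[A] N m, f = 0) ∧
  (∀ l m : Λ, ∀ i : ℕ, 0 < i → extVanish A (Δ l) (N m) i)

/-- A bundled family of costandard modules. -/
structure CostandardFamily (Δ : Λ → Type) [∀ l, AddCommGroup (Δ l)] [∀ l, Module R (Δ l)]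
    [∀ l, Module A (Δ l)] [∀ l, IsScalarTower R A (Δ l)] : Type 1 where
  Nab : Λ → Type
  [acg : ∀ l, AddCommGroup (Nab l)]
  [modR : ∀ l, Module R (Nab l)]
  [modA : ∀ l, Module A (Nab l)]
  [tower : ∀ l, IsScalarTower R A (Nab l)]
  cost : IsCostandard R A Λ Δ Nab

attribute [instance] CostandardFamily.acg CostandardFamily.modR CostandardFamily.modA
  CostandardFamily.tower

/-- `T` is a family of (partial) tilting modules forming a characteristic tilting module
`⊕ T(λ)`: each `T(λ)` admits an exact sequence `0 → Δ(λ) → T(λ) → X(λ) → 0` with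
`X(λ) ∈ F(Δ̃_{μ<λ})` and an exact sequence `0 → Y(λ) → T(λ) → ∇(λ) → 0` with
`Y(λ) ∈ F(∇̃_{μ<λ})`. -/
def IsCharTilting (Δ : Λ → Type) [∀ l, AddCommGroup (Δ l)] [∀ l, Module R (Δ l)]
    [∀ l, Module A (Δ l)] [∀ l, IsScalarTower R A (Δ l)]
    (N : Λ → Type) [∀ l, AddCommGroup (N l)] [∀ l, Module R (N l)]
    [∀ l, Module A (N l)] [∀ l, IsScalarTower R A (N l)]
    (T : Λ → Type) [∀ l, AddCommGroup (T l)] [∀ l, Module A (T l)] : Prop :=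
  ∀ l : Λ,
    (∃ f : Δ l →ₗ[A] T l, Function.Injective f ∧
      InFilt R A Λ Δ {m | m < l} ((T l) ⧸ LinearMap.range f)) ∧
    (∃ g : T l →ₗ[A] N l, Function.Surjective g ∧
      InFilt R A Λ N {m | m < l} ↥(LinearMap.ker g))

end Core

end

/-!
Extend `Δ(λ)` successively by universal extensions with the `Δ(μ)`, `μ < λ`, taking larger `μ`
first. Every step kills `Ext¹(Δ(μ), -)`, and the later ones do not revive it, so the resulting
module `T` satisfies `Ext¹(Δ(μ), T) = 0` for all `μ`.

Such a module is `∇̃`-filtered: a `Δ`-filtration of `A` can be arranged as a chain of two-sided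
ideals whose layers `L` lie in `add Δ(μ)`, and `Hom_A(-, T)` turns it into a filtration of
`T = Hom_A(A, T)` with layers `Hom_A(L, T) = ∇(μ) ⊗ Hom_A(Δ(μ), T)`. The top layer is `∇(λ)` since
`Hom_A(Δ(λ), T) = End_A(Δ(λ)) = R`. Both approximation properties follow from the vanishing of
`Ext¹` between `Δ̃`-filtered and `∇̃`-filtered modules.
-/

universe u v

section ExtOne

variable (A : Type u) [Ring A] [Small.{v} A]

/-- The vanishing of `Ext¹_A(M, N)`, for the bifunctor `CategoryTheory.Abelian.Ext`, whose long
exact sequences are available in Mathlib. -/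
def ExtOneVanishes (M N : Type v) [AddCommGroup M] [Module A M] [AddCommGroup N] [Module A N] :
    Prop :=
  Subsingleton (Abelian.Ext.{v} (ModuleCat.of A M) (ModuleCat.of A N) 1)

variable {A} {M N X Y Z : Type v} [AddCommGroup M] [Module A M] [AddCommGroup N] [Module A N]
  [AddCommGroup X] [Module A X] [AddCommGroup Y] [Module A Y] [AddCommGroup Z] [Module A Z]
  {i : X →ₗ[A] Y} {p : Y →ₗ[A] Z}

omit [Small.{v} A] in
lemma shortExact_shortComplexOfCompEqZero (hi : Function.Injective i) (hip : Function.Exact i p)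
    (hp : Function.Surjective p) :
    (ModuleCat.shortComplexOfCompEqZero i p hip.linearMap_comp_eq_zero).ShortExact :=
  ModuleCat.shortComplex_shortExact _ hip hi hp

namespace ExtOneVanishes

lemma of_subsingleton_left [Subsingleton M] : ExtOneVanishes A M N :=
  have := (ModuleCat.isZero_of_subsingleton (ModuleCat.of A M)).projective
  subsingleton_of_forall_eq 0 fun _ => Abelian.Ext.eq_zero_of_projective _

lemma of_subsingleton_right [Subsingleton N] : ExtOneVanishes A M N :=
  have := (ModuleCat.isZero_of_subsingleton (ModuleCat.of A N)).injective
  subsingleton_of_forall_eq 0 fun _ => Abelian.Ext.eq_zero_of_injective _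

lemma exists_extend (h : ExtOneVanishes A Z N) (hi : Function.Injective i)
    (hip : Function.Exact i p) (hp : Function.Surjective p) (φ : X →ₗ[A] N) :
    ∃ ψ : Y →ₗ[A] N, ψ ∘ₗ i = φ := by
  obtain ⟨x, hx⟩ := Abelian.Ext.contravariant_sequence_exact₁
    (shortExact_shortComplexOfCompEqZero hi hip hp) (ModuleCat.of A N)
    (.mk₀ (ModuleCat.ofHom φ)) rfl (h.elim _ _)
  obtain ⟨ψ, rfl⟩ := (Abelian.Ext.mk₀_bijective _ _).2 x
  rw [Abelian.Ext.mk₀_comp_mk₀] at hx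
  exact ⟨ψ.hom, congrArg ModuleCat.Hom.hom ((Abelian.Ext.mk₀_bijective _ _).1 hx)⟩

lemma exists_lift (h : ExtOneVanishes A M X) (hi : Function.Injective i)
    (hip : Function.Exact i p) (hp : Function.Surjective p) (φ : M →ₗ[A] Z) :
    ∃ ψ : M →ₗ[A] Y, p ∘ₗ ψ = φ := by
  obtain ⟨x, hx⟩ := Abelian.Ext.covariant_sequence_exact₃ (ModuleCat.of A M)
    (shortExact_shortComplexOfCompEqZero hi hip hp)
    (.mk₀ (ModuleCat.ofHom φ)) rfl (h.elim _ _)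
  obtain ⟨ψ, rfl⟩ := (Abelian.Ext.mk₀_bijective _ _).2 x
  rw [Abelian.Ext.mk₀_comp_mk₀] at hx
  exact ⟨ψ.hom, congrArg ModuleCat.Hom.hom ((Abelian.Ext.mk₀_bijective _ _).1 hx)⟩

lemma of_forall_exists_extend [Module.Projective A Y] (hi : Function.Injective i)
    (hip : Function.Exact i p) (hp : Function.Surjective p)
    (h : ∀ φ : X →ₗ[A] N, ∃ ψ : Y →ₗ[A] N, ψ ∘ₗ i = φ) : ExtOneVanishes A Z N := by
  have : Projective (ModuleCat.of A Y) := (IsProjective.iff_projective _).1 ‹_›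
  have hS := shortExact_shortComplexOfCompEqZero hi hip hp
  refine subsingleton_of_forall_eq 0 fun x => ?_
  obtain ⟨y, rfl⟩ := Abelian.Ext.contravariant_sequence_exact₃ hS (ModuleCat.of A N) x
    (Abelian.Ext.eq_zero_of_projective _) (n₀ := 0) rfl
  obtain ⟨φ, rfl⟩ := (Abelian.Ext.mk₀_bijective _ _).2 y
  obtain ⟨ψ, hψ⟩ := h φ.hom
  obtain rfl : ModuleCat.ofHom i ≫ ModuleCat.ofHom ψ = φ := by
    rw [← ModuleCat.ofHom_comp, hψ, ModuleCat.ofHom_hom]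
  rw [← Abelian.Ext.mk₀_comp_mk₀]
  exact hS.extClass_comp_assoc _

lemma of_exact_left (hi : Function.Injective i) (hip : Function.Exact i p)
    (hp : Function.Surjective p) (hX : ExtOneVanishes A X N) (hZ : ExtOneVanishes A Z N) :
    ExtOneVanishes A Y N := by
  refine subsingleton_of_forall_eq 0 fun y => ?_
  obtain ⟨z, rfl⟩ := Abelian.Ext.contravariant_sequence_exact₂
    (shortExact_shortComplexOfCompEqZero hi hip hp) _ y (hX.elim _ _)
  rw [show z = 0 from hZ.elim _ _, Abelian.Ext.comp_zero]

lemma of_exact_right (hi : Function.Injective i) (hip : Function.Exact i p)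
    (hp : Function.Surjective p) (hX : ExtOneVanishes A M X) (hZ : ExtOneVanishes A M Z) :
    ExtOneVanishes A M Y := by
  refine subsingleton_of_forall_eq 0 fun y => ?_
  obtain ⟨z, rfl⟩ := Abelian.Ext.covariant_sequence_exact₂ _
    (shortExact_shortComplexOfCompEqZero hi hip hp) y (hZ.elim _ _)
  rw [show z = 0 from hX.elim _ _, Abelian.Ext.zero_comp]

lemma of_sum_eq_id_left {ι : Type*} [Fintype ι] {s : ι → M →ₗ[A] X} {r : ι → X →ₗ[A] M}
    (h : ∑ k, r k ∘ₗ s k = LinearMap.id) (hX : ExtOneVanishes A X N) : ExtOneVanishes A M N := by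
  refine subsingleton_of_forall_eq 0 fun x => ?_
  have h' : 𝟙 (ModuleCat.of A M) = ∑ k, ModuleCat.ofHom (s k) ≫ ModuleCat.ofHom (r k) :=
    ModuleCat.hom_ext <| by rw [ModuleCat.hom_sum]; exact h.symm
  have h0 (k : ι) : (Abelian.Ext.mk₀ (ModuleCat.ofHom (r k))).comp x (zero_add 1) = 0 :=
    hX.elim _ _
  rw [← Abelian.Ext.mk₀_id_comp x, h', Abelian.Ext.mk₀_sum, Abelian.Ext.sum_comp]
  simp only [← Abelian.Ext.mk₀_comp_mk₀_assoc, h0, Abelian.Ext.comp_zero, Finset.sum_const_zero]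

lemma of_sum_eq_id_right {ι : Type*} [Fintype ι] {s : ι → N →ₗ[A] X} {r : ι → X →ₗ[A] N}
    (h : ∑ k, r k ∘ₗ s k = LinearMap.id) (hX : ExtOneVanishes A M X) : ExtOneVanishes A M N := by
  refine subsingleton_of_forall_eq 0 fun x => ?_
  have h' : 𝟙 (ModuleCat.of A N) = ∑ k, ModuleCat.ofHom (s k) ≫ ModuleCat.ofHom (r k) :=
    ModuleCat.hom_ext <| by rw [ModuleCat.hom_sum]; exact h.symm
  have h0 (k : ι) : x.comp (Abelian.Ext.mk₀ (ModuleCat.ofHom (s k))) (add_zero 1) = 0 :=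
    hX.elim _ _
  rw [← Abelian.Ext.comp_mk₀_id x, h', Abelian.Ext.mk₀_sum, Abelian.Ext.comp_sum]
  simp only [← Abelian.Ext.mk₀_comp_mk₀, ← Abelian.Ext.comp_assoc_of_third_deg_zero, h0,
    Abelian.Ext.zero_comp, Finset.sum_const_zero]

end ExtOneVanishes

lemma extOneVanishes_of_extVanish {A M N : Type} [Ring A] [AddCommGroup M] [Module A M]
    [AddCommGroup N] [Module A N] (h : extVanish A M N 1) : ExtOneVanishes A M N := by
  let P := projectiveResolution (ModuleCat.of A M)
  have hP : (P.complex.linearYonedaObj ℤ (ModuleCat.of A N)).ExactAt 1 :=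
    (HomologicalComplex.exactAt_iff_isZero_homology _ _).2 <|
    (@ModuleCat.isZero_of_subsingleton _ _ _ h).of_iso (P.isoExt 1 (ModuleCat.of A N)).symm
  rw [HomologicalComplex.exactAt_iff' _ 0 1 2 (by simp) (by simp),
    ShortComplex.moduleCat_exact_iff] at hP
  refine subsingleton_of_forall_eq 0 fun x => ?_
  obtain ⟨f, hf, rfl⟩ := P.extMk_surjective x 2 rfl
  obtain ⟨g, hg⟩ := hP f hf
  exact (P.extMk_eq_zero_iff f 2 rfl hf 0 rfl).2 ⟨g, hg⟩

end ExtOne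

section LinearMap

variable {A : Type*} [Ring A] {X Y Z : Type*} [AddCommGroup X] [Module A X] [AddCommGroup Y]
  [Module A Y] [AddCommGroup Z] [Module A Z]

lemma exists_comp_eq_of_ker_le {p : X →ₗ[A] Y} (hp : Function.Surjective p) {f : X →ₗ[A] Z}
    (h : LinearMap.ker p ≤ LinearMap.ker f) : ∃ g : Y →ₗ[A] Z, g ∘ₗ p = f :=
  ⟨(LinearMap.ker p).liftQ f h ∘ₗ (p.quotKerEquivOfSurjective hp).symm.toLinearMap, by
    ext x
    exact congrArg ((LinearMap.ker p).liftQ f h)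
      ((p.quotKerEquivOfSurjective hp).symm_apply_apply ((LinearMap.ker p).mkQ x))⟩

lemma exists_comp_eq_of_range_le {i : Y →ₗ[A] Z} (hi : Function.Injective i) {f : X →ₗ[A] Z}
    (h : LinearMap.range f ≤ LinearMap.range i) : ∃ g : X →ₗ[A] Y, i ∘ₗ g = f :=
  ⟨(LinearEquiv.ofInjective i hi).symm.toLinearMap ∘ₗ
      f.codRestrict _ fun x => h (LinearMap.mem_range_self f x), by
    ext x
    exact congrArg Subtype.val ((LinearEquiv.ofInjective i hi).apply_symm_apply _)⟩

end LinearMap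

section Filtrations

/-- The modules with a finite filtration whose factors satisfy `Q`, as an inductive predicate:
`Filt` is the closure of the zero modules under extensions `0 → Y → X → Z → 0` with `Q Z`. -/
inductive Filt (A : Type u) [Ring A] (Q : ∀ (Z : Type v) [AddCommGroup Z] [Module A Z], Prop) :
    ∀ (X : Type v) [AddCommGroup X] [Module A X], Prop
  | zero (X : Type v) [AddCommGroup X] [Module A X] [Subsingleton X] : Filt A Q X
  | step {Y X Z : Type v} [AddCommGroup Y] [Module A Y] [AddCommGroup X] [Module A X]
      [AddCommGroup Z] [Module A Z] {i : Y →ₗ[A] X} {p : X →ₗ[A] Z}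
      (hi : Function.Injective i) (hip : Function.Exact i p) (hp : Function.Surjective p)
      (hY : Filt A Q Y) (hZ : Q Z) : Filt A Q X

variable {A : Type u} [Ring A] {Q : ∀ (Z : Type v) [AddCommGroup Z] [Module A Z], Prop}
  {M N X Y Z : Type v} [AddCommGroup M] [Module A M] [AddCommGroup N] [Module A N]
  [AddCommGroup X] [Module A X] [AddCommGroup Y] [Module A Y] [AddCommGroup Z] [Module A Z]

namespace Filt

lemma of_factor (h : Q X) : Filt A Q X :=
  .step (Y := PUnit) (i := 0) (p := LinearMap.id) (Function.injective_of_subsingleton _)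
    ((LinearMap.exact_zero_iff_injective _ _).2 Function.injective_id) Function.surjective_id
    (.zero _) h

lemma of_equiv (e : X ≃ₗ[A] Y) (h : Filt A Q X) : Filt A Q Y := by
  cases h with
  | zero =>
    have := e.symm.injective.subsingleton
    exact .zero Y
  | step hi hip hp hY hZ =>
    exact .step (i := e.toLinearMap ∘ₗ _) (p := _ ∘ₗ e.symm.toLinearMap) (e.injective.comp hi)
      ((LinearEquiv.conj_symm_exact_iff_exact _ _ e.symm).2 hip)
      (hp.comp e.symm.surjective) hY hZ

lemma mono {Q' : ∀ (Z : Type v) [AddCommGroup Z] [Module A Z], Prop}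
    (hQ : ∀ (Z : Type v) [AddCommGroup Z] [Module A Z], Q Z → Q' Z) (h : Filt A Q X) :
    Filt A Q' X := by
  induction h with
  | zero => exact .zero _
  | step hi hip hp _ hZ ih => exact .step hi hip hp ih (hQ _ hZ)

lemma of_exact {i : Y →ₗ[A] X} {p : X →ₗ[A] Z} (hi : Function.Injective i)
    (hip : Function.Exact i p) (hp : Function.Surjective p) (hY : Filt A Q Y) (hZ : Filt A Q Z) :
    Filt A Q X := by
  induction hZ generalizing X with
  | zero Z =>
    exact hY.of_equiv (LinearEquiv.ofBijective i
      ⟨hi, fun x => (hip x).1 (Subsingleton.elim _ _)⟩)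
  | @step Z' Z W _ _ _ _ _ _ j q hj hjq hq _ hW ih =>
    let X' : Submodule A X := LinearMap.ker (q ∘ₗ p)
    obtain ⟨p', hp'⟩ := exists_comp_eq_of_range_le hj (f := p ∘ₗ X'.subtype) (by
      rintro _ ⟨x, rfl⟩
      exact (hjq _).1 x.2)
    have hpX (x : X') : j (p' x) = p x := LinearMap.congr_fun hp' x
    let i' : Y →ₗ[A] X' := i.codRestrict X' fun y => by simp [X', hip.apply_apply_eq_zero]
    refine .step X'.subtype_injective (LinearMap.exact_subtype_ker_map _) (hq.comp hp)
      (ih (i := i') (p := p') (fun x y hxy => hi (congrArg Subtype.val hxy)) ?_ ?_) hW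
    · intro x
      rw [← hj.eq_iff, hpX, map_zero, hip x]
      exact ⟨fun ⟨y, hy⟩ => ⟨y, Subtype.ext hy⟩, fun ⟨y, hy⟩ => ⟨y, congrArg Subtype.val hy⟩⟩
    · intro z
      obtain ⟨x, hx⟩ := hp (j z)
      exact ⟨⟨x, by simp [X', hx, hjq.apply_apply_eq_zero]⟩, hj ((hpX _).trans hx)⟩

lemma pi {ι : Type} [Finite ι] {X : ι → Type v} [∀ k, AddCommGroup (X k)] [∀ k, Module A (X k)]
    (h : ∀ k, Filt A Q (X k)) : Filt A Q (∀ k, X k) := by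
  induction ι using Finite.induction_empty_option with
  | h_empty => exact .zero _
  | of_equiv e ih => exact (ih fun k => h (e k)).of_equiv (LinearEquiv.piCongrLeft A X e)
  | h_option ih =>
    exact (of_exact LinearMap.inr_injective .inr_fst LinearMap.fst_surjective
      (ih fun k => h (some k)) (h none)).of_equiv (LinearEquiv.piOptionEquivProd A).symm

lemma extOneVanishes_left [Small.{v} A] (h : Filt A Q X)
    (hQ : ∀ (Z : Type v) [AddCommGroup Z] [Module A Z], Q Z → ExtOneVanishes A Z N) :
    ExtOneVanishes A X N := by
  induction h with
  | zero => exact .of_subsingleton_left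
  | step hi hip hp _ hZ ih => exact .of_exact_left hi hip hp ih (hQ _ hZ)

lemma extOneVanishes_right [Small.{v} A] (h : Filt A Q X)
    (hQ : ∀ (Z : Type v) [AddCommGroup Z] [Module A Z], Q Z → ExtOneVanishes A M Z) :
    ExtOneVanishes A M X := by
  induction h with
  | zero => exact .of_subsingleton_right
  | step hi hip hp _ hZ ih => exact .of_exact_right hi hip hp ih (hQ _ hZ)

lemma hom_eq_zero_left (h : Filt A Q X)
    (hQ : ∀ (Z : Type v) [AddCommGroup Z] [Module A Z], Q Z → ∀ f : Z →ₗ[A] N, f = 0)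
    (f : X →ₗ[A] N) : f = 0 := by
  induction h with
  | zero => exact Subsingleton.elim _ _
  | step _ hip hp _ hZ ih =>
    obtain ⟨g, rfl⟩ := exists_comp_eq_of_ker_le hp (f := f)
      (hip.linearMap_ker_eq.trans_le (LinearMap.range_le_ker_iff.2 (ih _)))
    rw [hQ _ hZ g, LinearMap.zero_comp]

lemma hom_eq_zero_right (h : Filt A Q X)
    (hQ : ∀ (Z : Type v) [AddCommGroup Z] [Module A Z], Q Z → ∀ f : M →ₗ[A] Z, f = 0)
    (f : M →ₗ[A] X) : f = 0 := by
  induction h with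
  | zero => exact Subsingleton.elim _ _
  | step hi hip _ _ hZ ih =>
    obtain ⟨g, rfl⟩ := exists_comp_eq_of_range_le hi (f := f)
      (hip.linearMap_ker_eq ▸ LinearMap.range_le_ker_iff.2 (hQ _ hZ _))
    rw [ih g, LinearMap.comp_zero]

lemma of_chain {n : ℕ} {c : Fin (n + 1) → Submodule A X} (h0 : c 0 = ⊥) (h1 : c (Fin.last n) = ⊤)
    (hc : Monotone c) (hQ : ∀ i : Fin n, Q (c i.succ ⧸ (c i.castSucc).submoduleOf (c i.succ))) :
    Filt A Q X := by
  have key (k : Fin (n + 1)) : Filt A Q (c k) := by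
    induction k using Fin.induction with
    | zero => exact h0 ▸ .zero _
    | succ k ih =>
      have hle : c k.castSucc ≤ c k.succ := hc Fin.castSucc_lt_succ.le
      exact .step (Submodule.subtype_injective _) (LinearMap.exact_subtype_mkQ _)
        (Submodule.mkQ_surjective _) (ih.of_equiv (Submodule.submoduleOfEquivOfLe hle).symm) (hQ k)
  exact (h1 ▸ key (Fin.last n)).of_equiv Submodule.topEquiv

/-- The relation between submodules `V` and `W` of `E` that `V ≤ W` and `Q (W ⧸ V)`. Its
`RelSeries` are the chains of submodules in `InFilt` and `InFiltPlain`. -/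
def FactorRel (Q : ∀ (Z : Type v) [AddCommGroup Z] [Module A Z], Prop) (E : Type v)
    [AddCommGroup E] [Module A E] : SetRel (Submodule A E) (Submodule A E) :=
  {VW | VW.1 ≤ VW.2 ∧ Q (VW.2 ⧸ VW.1.submoduleOf VW.2)}

lemma exists_relSeries (h : Filt A Q X)
    (hQ : ∀ (Z Z' : Type v) [AddCommGroup Z] [Module A Z] [AddCommGroup Z'] [Module A Z'],
      (Z ≃ₗ[A] Z') → Q Z → Q Z') {j : X →ₗ[A] M} (hj : Function.Injective j) :
    ∃ s : RelSeries (FactorRel Q M), s.head = ⊥ ∧ s.last = LinearMap.range j := by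
  induction h with
  | zero X =>
    exact ⟨.singleton _ ⊥, rfl, (LinearMap.range_eq_bot.2 (Subsingleton.elim _ _)).symm⟩
  | @step Y X Z _ _ _ _ _ _ i p hi hip hp _ hZ ih =>
    obtain ⟨s, hs0, hs1⟩ := ih (j := j ∘ₗ i) (hj.comp hi)
    let e := LinearEquiv.ofInjective j hj
    have hker : LinearMap.ker (p ∘ₗ e.symm.toLinearMap) =
        (LinearMap.range (j ∘ₗ i)).submoduleOf (LinearMap.range j) := by
      refine SetLike.ext (e.surjective.forall.2 fun x => ?_)
      simp only [LinearMap.mem_ker, LinearMap.comp_apply, LinearEquiv.coe_coe, e.symm_apply_apply,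
        hip x, Submodule.submoduleOf, Submodule.mem_comap, LinearMap.mem_range]
      exact exists_congr fun y => hj.eq_iff.symm
    have hrel : (s.last, LinearMap.range j) ∈ FactorRel Q M := by
      rw [hs1]
      refine ⟨LinearMap.range_comp_le_range i j, hQ _ _ (LinearEquiv.symm ?_) hZ⟩
      exact (Submodule.quotEquivOfEq _ _ hker.symm).trans
        (LinearMap.quotKerEquivOfSurjective _ (hp.comp e.symm.surjective))
    exact ⟨s.snoc _ hrel, (s.head_snoc _ _).trans hs0, s.last_snoc _ _⟩

lemma exists_chain (h : Filt A Q X)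
    (hQ : ∀ (Z Z' : Type v) [AddCommGroup Z] [Module A Z] [AddCommGroup Z'] [Module A Z'],
      (Z ≃ₗ[A] Z') → Q Z → Q Z') :
    ∃ (n : ℕ) (c : Fin (n + 1) → Submodule A X), c 0 = ⊥ ∧ c (Fin.last n) = ⊤ ∧ Monotone c ∧
      ∀ i : Fin n, Q (c i.succ ⧸ (c i.castSucc).submoduleOf (c i.succ)) := by
  obtain ⟨s, hs0, hs1⟩ := h.exists_relSeries hQ (j := LinearMap.id) Function.injective_id
  exact ⟨s.length, s, hs0, hs1.trans LinearMap.range_id,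
    Fin.monotone_iff_le_succ.2 fun i => (s.step i).1, fun i => (s.step i).2⟩

end Filt

end Filtrations

section AdditiveClosure

variable {A : Type} [Ring A] {D M N X Y Z : Type} [AddCommGroup D] [Module A D]
  [AddCommGroup M] [Module A M] [AddCommGroup N] [Module A N] [AddCommGroup X] [Module A X]
  [AddCommGroup Y] [Module A Y] [AddCommGroup Z] [Module A Z]

namespace InAdd

lemma of_sum_eq_id {ι : Type*} [Fintype ι] {s : ι → Z →ₗ[A] D} {r : ι → D →ₗ[A] Z}
    (h : ∑ k, r k ∘ₗ s k = LinearMap.id) : InAdd A D Z := by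
  refine ⟨Fintype.card ι, LinearMap.pi fun k => s ((Fintype.equivFin ι).symm k),
    ∑ k, r ((Fintype.equivFin ι).symm k) ∘ₗ LinearMap.proj k, ?_⟩
  rw [← h, ← (Fintype.equivFin ι).symm.sum_comp]
  ext z
  simp

lemma exists_sum_eq_id (h : InAdd A D Z) : ∃ (n : ℕ) (s : Fin n → Z →ₗ[A] D)
    (r : Fin n → D →ₗ[A] Z), ∑ k, r k ∘ₗ s k = LinearMap.id := by
  obtain ⟨n, s, r, hrs⟩ := h
  refine ⟨n, fun k => LinearMap.proj k ∘ₗ s, fun k => r ∘ₗ LinearMap.single A (fun _ => D) k, ?_⟩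
  ext z
  simp only [LinearMap.sum_apply, LinearMap.comp_apply, ← map_sum, LinearMap.proj_apply,
    LinearMap.single_apply, Finset.univ_sum_single]
  exact LinearMap.congr_fun hrs z

variable (A D Z) in
lemma of_subsingleton [Subsingleton Z] : InAdd A D Z :=
  of_sum_eq_id (ι := Empty) (s := nofun) (r := nofun) (Subsingleton.elim _ _)

variable (A D) in
lemma refl : InAdd A D D :=
  of_sum_eq_id (ι := Unit) (s := fun _ => LinearMap.id) (r := fun _ => LinearMap.id) (by simp)

lemma trans (hX : InAdd A D X) (hZ : InAdd A X Z) : InAdd A D Z := by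
  obtain ⟨m, s, r, hrs⟩ := hX.exists_sum_eq_id
  obtain ⟨n, s', r', hrs'⟩ := hZ.exists_sum_eq_id
  refine of_sum_eq_id (s := fun k : Fin n × Fin m => s k.2 ∘ₗ s' k.1)
    (r := fun k => r' k.1 ∘ₗ r k.2) ?_
  ext z
  have hz (x : X) : ∑ k, r k (s k x) = x := by simpa using LinearMap.congr_fun hrs x
  simpa [Fintype.sum_prod_type, ← map_sum, hz] using LinearMap.congr_fun hrs' z

lemma of_isDirectSummand (hZ : IsDirectSummand A Z X) (hX : InAdd A D X) : InAdd A D Z := by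
  obtain ⟨i, p, hpi⟩ := hZ
  obtain ⟨n, s, r, hrs⟩ := hX
  exact ⟨n, s ∘ₗ i, p ∘ₗ r, by
    rw [LinearMap.comp_assoc, ← LinearMap.comp_assoc i s r, hrs, LinearMap.id_comp, hpi]⟩

lemma of_equiv (e : X ≃ₗ[A] Z) (hX : InAdd A D X) : InAdd A D Z :=
  hX.of_isDirectSummand ⟨e.symm.toLinearMap, e.toLinearMap, e.comp_symm⟩

lemma prod (hX : InAdd A D X) (hY : InAdd A D Y) : InAdd A D (X × Y) := by
  obtain ⟨m, s, r, hrs⟩ := hX.exists_sum_eq_id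
  obtain ⟨n, s', r', hrs'⟩ := hY.exists_sum_eq_id
  refine of_sum_eq_id (ι := Fin m ⊕ Fin n)
    (s := Sum.elim (fun k => s k ∘ₗ LinearMap.fst A X Y) (fun k => s' k ∘ₗ LinearMap.snd A X Y))
    (r := Sum.elim (fun k => LinearMap.inl A X Y ∘ₗ r k) (fun k => LinearMap.inr A X Y ∘ₗ r' k)) ?_
  refine LinearMap.ext fun z => Prod.ext ?_ ?_
  · simpa [Prod.fst_sum] using LinearMap.congr_fun hrs z.1
  · simpa [Prod.snd_sum] using LinearMap.congr_fun hrs' z.2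

lemma hom_eq_zero_left (h : InAdd A D Z) (hD : ∀ f : D →ₗ[A] N, f = 0) (f : Z →ₗ[A] N) :
    f = 0 := by
  obtain ⟨n, s, r, hrs⟩ := h.exists_sum_eq_id
  ext z
  rw [← LinearMap.id_apply (R := A) z, ← hrs, LinearMap.sum_apply, map_sum]
  exact Finset.sum_eq_zero fun k _ => LinearMap.congr_fun (hD (f ∘ₗ r k)) (s k z)

lemma hom_eq_zero_right (h : InAdd A D Z) (hD : ∀ f : M →ₗ[A] D, f = 0) (f : M →ₗ[A] Z) :
    f = 0 := by
  obtain ⟨n, s, r, hrs⟩ := h.exists_sum_eq_id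
  ext y
  rw [← LinearMap.id_apply (R := A) (f y), ← hrs, LinearMap.sum_apply]
  exact Finset.sum_eq_zero fun k _ => by
    simpa using congrArg (r k) (LinearMap.congr_fun (hD (s k ∘ₗ f)) y)

lemma extOneVanishes_left (h : InAdd A D Z) (hD : ExtOneVanishes A D N) :
    ExtOneVanishes A Z N :=
  let ⟨_, _, _, hrs⟩ := h.exists_sum_eq_id
  .of_sum_eq_id_left hrs hD

lemma extOneVanishes_right (h : InAdd A D Z) (hD : ExtOneVanishes A M D) :
    ExtOneVanishes A M Z :=
  let ⟨_, _, _, hrs⟩ := h.exists_sum_eq_id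
  .of_sum_eq_id_right hrs hD

end InAdd

end AdditiveClosure

section AddFiltrations

variable {A : Type} [Ring A] {Λ : Type} {D : Λ → Type} [∀ l, AddCommGroup (D l)]
  [∀ l, Module A (D l)]

/-- `Z` lies in `add D(λ)` for some `λ ∈ S`. When `End_A(D(λ)) = R`, the modules `D(λ) ⊗_R U` with
`U` finitely generated projective are of this form, so that filtrations with such factors are a
substitute for `F(D̃_S)` which does not involve the `R`-module structures. -/
def AddFactor (A : Type) [Ring A] {Λ : Type} (D : Λ → Type) [∀ l, AddCommGroup (D l)]
    [∀ l, Module A (D l)] (S : Set Λ) (Z : Type) [AddCommGroup Z] [Module A Z] : Prop :=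
  ∃ l ∈ S, InAdd A (D l) Z

variable {S S' : Set Λ} {M N X Y Z : Type} [AddCommGroup M] [Module A M] [AddCommGroup N]
  [Module A N] [AddCommGroup X] [Module A X] [AddCommGroup Y] [Module A Y]
  [AddCommGroup Z] [Module A Z]

namespace Filt

lemma mono_addFactor (hS : S ⊆ S') (h : Filt A (AddFactor A D S) X) :
    Filt A (AddFactor A D S') X :=
  h.mono fun _ _ _ ⟨l, hl, hZ⟩ => ⟨l, hS hl, hZ⟩

lemma addFactor_extOneVanishes_left (h : Filt A (AddFactor A D S) X)
    (hD : ∀ l ∈ S, ExtOneVanishes A (D l) N) : ExtOneVanishes A X N :=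
  h.extOneVanishes_left fun _ _ _ ⟨l, hl, hZ⟩ => hZ.extOneVanishes_left (hD l hl)

lemma addFactor_extOneVanishes_right (h : Filt A (AddFactor A D S) X)
    (hD : ∀ l ∈ S, ExtOneVanishes A M (D l)) : ExtOneVanishes A M X :=
  h.extOneVanishes_right fun _ _ _ ⟨l, hl, hZ⟩ => hZ.extOneVanishes_right (hD l hl)

lemma addFactor_hom_eq_zero_left (h : Filt A (AddFactor A D S) X)
    (hD : ∀ l ∈ S, ∀ f : D l →ₗ[A] N, f = 0) (f : X →ₗ[A] N) : f = 0 :=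
  h.hom_eq_zero_left (fun _ _ _ ⟨l, hl, hZ⟩ => hZ.hom_eq_zero_left (hD l hl)) f

lemma addFactor_hom_eq_zero_right (h : Filt A (AddFactor A D S) X)
    (hD : ∀ l ∈ S, ∀ f : M →ₗ[A] D l, f = 0) (f : M →ₗ[A] X) : f = 0 :=
  h.hom_eq_zero_right (fun _ _ _ ⟨l, hl, hZ⟩ => hZ.hom_eq_zero_right (hD l hl)) f

end Filt

variable {i : Y →ₗ[A] X} {p : X →ₗ[A] Z} {V : Submodule A Y} {r : X →ₗ[A] Y ⧸ V}

lemma nonempty_quotient_map_equiv_prod (hip : Function.Exact i p)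
    (hp : Function.Surjective p) (hr : r ∘ₗ i = V.mkQ) :
    Nonempty ((X ⧸ V.map i) ≃ₗ[A] (Y ⧸ V) × Z) := by
  have hri (y : Y) : r (i y) = V.mkQ y := LinearMap.congr_fun hr y
  have hsurj : Function.Surjective (r.prod p) := by
    rintro ⟨y, z⟩
    obtain ⟨x, rfl⟩ := hp z
    obtain ⟨y', hy'⟩ := V.mkQ_surjective (y - r x)
    exact ⟨x + i y', by simp [hri, hip.apply_apply_eq_zero, hy']⟩
  have hker : LinearMap.ker (r.prod p) = V.map i := by
    ext x
    simp only [LinearMap.ker_prod, Submodule.mem_inf, LinearMap.mem_ker, hip x, Submodule.mem_map]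
    refine ⟨?_, ?_⟩
    · rintro ⟨hx, y, rfl⟩
      exact ⟨y, by simpa [hri] using hx, rfl⟩
    · rintro ⟨y, hy, rfl⟩
      exact ⟨by simpa [hri] using hy, y, rfl⟩
  exact ⟨(Submodule.quotEquivOfEq _ _ hker.symm).trans
    (LinearMap.quotKerEquivOfSurjective _ hsurj)⟩

namespace Filt

lemma ker_of_comp_eq_mkQ (hi : Function.Injective i) (hip : Function.Exact i p)
    (hp : Function.Surjective p) (hr : r ∘ₗ i = V.mkQ)
    {Q : ∀ (Z : Type) [AddCommGroup Z] [Module A Z], Prop} (hV : Filt A Q V) (hZ : Q Z) :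
    Filt A Q (LinearMap.ker r) := by
  have hri (y : Y) : r (i y) = V.mkQ y := LinearMap.congr_fun hr y
  refine .step (i := i.restrict (p := V) (q := LinearMap.ker r) fun y hy => by simpa [hri] using hy)
    (p := p ∘ₗ (LinearMap.ker r).subtype) (fun y y' h => ?_) (fun x => ?_) (fun z => ?_) hV hZ
  · exact Subtype.ext (hi (congrArg Subtype.val h))
  · refine (hip x).trans ⟨?_, ?_⟩
    · rintro ⟨y, hy⟩
      have hyV : y ∈ V := by rw [← V.ker_mkQ, LinearMap.mem_ker, ← hri, hy, x.2]
      exact ⟨⟨y, hyV⟩, Subtype.ext hy⟩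
    · rintro ⟨y, rfl⟩
      exact ⟨y, rfl⟩
  · obtain ⟨x, rfl⟩ := hp z
    obtain ⟨y, hy⟩ := V.mkQ_surjective (r x)
    exact ⟨⟨x - i y, by simp [hri, hy]⟩, by simp [hip.apply_apply_eq_zero]⟩

variable [PartialOrder Λ]

lemma exists_submodule_of_minimal (hExt : ∀ l m : Λ, ¬ l < m → ExtOneVanishes A (D l) (D m))
    {μ : Λ} (hμ : ∀ ν ∈ S, ¬ ν < μ) (h : Filt A (AddFactor A D S) X) :
    ∃ V : Submodule A X, Filt A (AddFactor A D (S \ {μ})) V ∧ InAdd A (D μ) (X ⧸ V) := by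
  induction h with
  | zero X =>
    exact ⟨⊥, .zero _, .of_subsingleton A (D μ) (X ⧸ ⊥)⟩
  | step hi hip hp _ hZ ih =>
    obtain ⟨V, hV, hYV⟩ := ih
    obtain ⟨ν, hν, hZ⟩ := hZ
    obtain ⟨r, hr⟩ := (hZ.extOneVanishes_left
      (hYV.extOneVanishes_right (hExt ν μ (hμ ν hν)))).exists_extend hi hip hp V.mkQ
    obtain rfl | hνμ := eq_or_ne ν μ
    · obtain ⟨e⟩ := nonempty_quotient_map_equiv_prod hip hp hr
      exact ⟨V.map _, hV.of_equiv (V.equivMapOfInjective _ hi), (hYV.prod hZ).of_equiv e.symm⟩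
    · have hr' : Function.Surjective r := .of_comp (g := _) (hr ▸ V.mkQ_surjective :)
      exact ⟨LinearMap.ker r, hV.ker_of_comp_eq_mkQ hi hip hp hr ⟨ν, ⟨hν, hνμ⟩, hZ⟩,
        hYV.of_equiv (LinearMap.quotKerEquivOfSurjective r hr').symm⟩

lemma of_isDirectSummand [Finite Λ] (hHom : ∀ l m : Λ, ¬ l ≤ m → ∀ f : D l →ₗ[A] D m, f = 0)
    (hExt : ∀ l m : Λ, ¬ l < m → ExtOneVanishes A (D l) (D m)) (hY : IsDirectSummand A Y X)
    (h : Filt A (AddFactor A D S) X) : Filt A (AddFactor A D S) Y := by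
  induction hn : S.ncard using Nat.strong_induction_on generalizing S X Y with | _ n ih
  obtain ⟨s, r, hrs⟩ := hY
  have hrs' (y : Y) : r (s y) = y := LinearMap.congr_fun hrs y
  obtain rfl | hne := S.eq_empty_or_nonempty
  · have : Subsingleton Y := subsingleton_of_forall_eq 0 fun y => by
      rw [← hrs' y, h.addFactor_hom_eq_zero_left (by simp) r, LinearMap.zero_apply]
    exact .zero Y
  obtain ⟨μ, hμS, hμ⟩ := S.toFinite.exists_minimal hne
  have hmin (ν : Λ) (hν : ν ∈ S) : ¬ ν < μ := fun hlt => hlt.not_ge (hμ hν hlt.le)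
  obtain ⟨V, hV, hXV⟩ := h.exists_submodule_of_minimal hExt hmin
  have hsr (x : X) (hx : x ∈ V) : s (r x) ∈ V := by
    have : V.mkQ ∘ₗ s ∘ₗ r ∘ₗ V.subtype = 0 := hV.addFactor_hom_eq_zero_left
      (fun ν hν => hXV.hom_eq_zero_right (hHom ν μ fun hle => hmin ν hν.1 (hle.lt_of_ne hν.2))) _
    exact (Submodule.Quotient.mk_eq_zero V).1 (LinearMap.congr_fun this ⟨x, hx⟩)
  have hW : IsDirectSummand A (V.comap s) V :=
    ⟨s.restrict fun _ hy => hy, r.restrict hsr, by ext y; exact hrs' y⟩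
  have hYW : IsDirectSummand A (Y ⧸ V.comap s) (X ⧸ V) :=
    ⟨(V.comap s).mapQ V s le_rfl, V.mapQ (V.comap s) r hsr, by ext y; simp [hrs']⟩
  have hWfilt := ih _ (hn ▸ Set.ncard_sdiff_singleton_lt_of_mem hμS) hW hV rfl
  exact .step (Submodule.subtype_injective _) (LinearMap.exact_subtype_mkQ _)
    (Submodule.mkQ_surjective _) (hWfilt.mono_addFactor Set.sdiff_subset)
    ⟨μ, hμS, hXV.of_isDirectSummand hYW⟩

end Filt

end AddFiltrations

section HomTensor

variable {R : Type} [CommRing R] {A : Type} [Ring A] [Algebra R A]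
  {D L M N : Type} [AddCommGroup D] [Module R D] [Module A D] [IsScalarTower R A D]
  [AddCommGroup L] [Module A L] [AddCommGroup M] [Module R M] [Module A M] [IsScalarTower R A M]
  [AddCommGroup N] [Module R N] [Module A N] [IsScalarTower R A N]

variable (R A D L M) in
/-- Composition of homomorphisms through `D`, as a linear map on the tensor product. -/
def compTensor : (L →ₗ[A] D) ⊗[R] (D →ₗ[A] M) →ₗ[R] (L →ₗ[A] M) :=
  TensorProduct.lift <| LinearMap.mk₂ R (fun u w => w ∘ₗ u)
    (fun u u' w => LinearMap.comp_add u u' w)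
    (fun _ _ w => by ext; exact w.map_smul_of_tower _ _) (fun _ _ _ => LinearMap.add_comp _ _ _)
    (fun _ _ _ => rfl)

@[simp] lemma compTensor_tmul (u : L →ₗ[A] D) (w : D →ₗ[A] M) :
    compTensor R A D L M (u ⊗ₜ w) = w ∘ₗ u := rfl

lemma InAdd.compTensor_bijective (hL : InAdd A D L)
    (hD : Function.Surjective (algebraMap R (Module.End A D))) :
    Function.Bijective (compTensor R A D L M) := by
  obtain ⟨n, s, r, hrs⟩ := hL.exists_sum_eq_id
  have hrs' (x : L) : ∑ k, r k (s k x) = x := by simpa using LinearMap.congr_fun hrs x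
  refine Function.bijective_iff_has_inverse.2
    ⟨fun ψ => ∑ k, s k ⊗ₜ (ψ ∘ₗ r k), fun t => ?_, fun ψ => ?_⟩
  · induction t with
    | zero => simp
    | add t t' ht ht' =>
      simp only [map_add, LinearMap.add_comp, TensorProduct.tmul_add, Finset.sum_add_distrib] at *
      rw [ht, ht']
    | tmul u w =>
      choose c hc using fun k => hD (u ∘ₗ r k)
      have huc (k) (d : D) : u (r k d) = c k • d := (LinearMap.congr_fun (hc k) d).symm
      have hu : ∑ k, c k • s k = u := by
        ext x
        conv_rhs => rw [← hrs' x, map_sum]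
        simp [huc]
      have hw (k) : (w ∘ₗ u) ∘ₗ r k = c k • w := by
        ext d
        simp [huc]
      conv_rhs => rw [← hu, TensorProduct.sum_tmul]
      simp only [compTensor_tmul, hw, TensorProduct.tmul_smul, TensorProduct.smul_tmul']
  · ext x
    conv_rhs => rw [← hrs' x]
    simp

lemma InAdd.bijective_comp {g : D →ₗ[A] N} (hL : InAdd A D L)
    (hg : Function.Bijective fun u : D →ₗ[A] D => g ∘ₗ u) :
    Function.Bijective fun u : L →ₗ[A] D => g ∘ₗ u := by
  obtain ⟨n, s, r, hrs⟩ := hL.exists_sum_eq_id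
  have hrs' (x : L) : ∑ k, r k (s k x) = x := by simpa using LinearMap.congr_fun hrs x
  refine ⟨fun u u' h => ?_, fun v => ?_⟩
  · have hk (k) : u ∘ₗ r k = u' ∘ₗ r k := hg.1 (congrArg (· ∘ₗ r k) h)
    ext x
    rw [← hrs' x, map_sum, map_sum]
    exact Finset.sum_congr rfl fun k _ => LinearMap.congr_fun (hk k) _
  · choose u hu using fun k => hg.2 (v ∘ₗ r k)
    refine ⟨∑ k, u k ∘ₗ s k, LinearMap.ext fun x => ?_⟩
    conv_rhs => rw [← hrs' x, map_sum]
    simp only [LinearMap.comp_apply, LinearMap.sum_apply, map_sum]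
    exact Finset.sum_congr rfl fun k _ => LinearMap.congr_fun (hu k) _

lemma bijective_comp_symm_one (hD : Function.Surjective (algebraMap R (Module.End A D)))
    (e : (D →ₗ[A] N) ≃ₗ[R] R) : Function.Bijective fun u : D →ₗ[A] D => e.symm 1 ∘ₗ u := by
  have key (c : R) : e.symm 1 ∘ₗ algebraMap R (Module.End A D) c = e.symm c := by
    conv_rhs => rw [← mul_one c, ← smul_eq_mul, map_smul]
    ext d
    exact (e.symm 1).map_smul_of_tower c d
  refine ⟨hD.forall₂.2 fun c c' h => ?_, fun v => ⟨algebraMap R _ (e v), by simp [key]⟩⟩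
  rw [e.symm.injective (((key c).symm.trans h).trans (key c'))]

lemma InAdd.exists_tensor_equiv (hL : InAdd A D L)
    (hD : Function.Surjective (algebraMap R (Module.End A D))) (e : (D →ₗ[A] N) ≃ₗ[R] R)
    (ρ : N ≃ₗ[R] (L →ₗ[A] N)) (τ : A → L →ₗ[A] L) (hτ : ∀ a n, ρ (a • n) = ρ n ∘ₗ τ a) :
    ∃ Φ : N ⊗[R] (D →ₗ[A] M) ≃ₗ[R] (L →ₗ[A] M), ∀ a t, Φ (a • t) = Φ t ∘ₗ τ a := by
  have hg := hL.bijective_comp (bijective_comp_symm_one hD e)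
  let γ : (L →ₗ[A] D) ≃ₗ[R] (L →ₗ[A] N) := .ofBijective
    { toFun u := e.symm 1 ∘ₗ u
      map_add' u u' := LinearMap.comp_add u u' _
      map_smul' c u := by ext; exact (e.symm 1).map_smul_of_tower _ _ } hg
  have hγ (u : L →ₗ[A] D) (a : A) : γ (u ∘ₗ τ a) = γ u ∘ₗ τ a := rfl
  let σ : N ≃ₗ[R] (L →ₗ[A] D) := ρ.trans γ.symm
  have hσ (a : A) (n : N) : σ (a • n) = σ n ∘ₗ τ a :=
    γ.injective (by simp [σ, hτ, hγ])
  refine ⟨(TensorProduct.congr σ (.refl R _)).trans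
    (.ofBijective _ (hL.compTensor_bijective hD)), fun a t => ?_⟩
  induction t with
  | zero => simp
  | add t t' ht ht' => simp only [smul_add, map_add, ht, ht', LinearMap.add_comp]
  | tmul n w => simp [TensorProduct.smul_tmul', hσ, LinearMap.comp_assoc]

end HomTensor

section LowerSets

variable {Λ : Type*} [PartialOrder Λ]

lemma isLowerSet_sdiff_singleton {I : Set Λ} (hI : IsLowerSet I) {μ : Λ}
    (hμ : Maximal (· ∈ I) μ) : IsLowerSet (I \ {μ}) := fun _ _ hba ha =>
  ⟨hI hba ha.1, fun hb => ha.2 ((hμ.eq_of_le ha.1 (hb ▸ hba)).symm)⟩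

@[elab_as_elim]
lemma isLowerSet_induction [Finite Λ] {motive : ∀ I : Set Λ, IsLowerSet I → Prop}
    (empty : motive ∅ isLowerSet_empty)
    (insert : ∀ (I : Set Λ) (μ : Λ) (hI : IsLowerSet I) (_ : μ ∉ I)
      (hI' : IsLowerSet (insert μ I)), motive I hI → motive (insert μ I) hI')
    (I : Set Λ) (hI : IsLowerSet I) : motive I hI := by
  induction hn : I.ncard using Nat.strong_induction_on generalizing I with | _ n ih
  obtain rfl | hne := I.eq_empty_or_nonempty
  · exact empty
  obtain ⟨μ, hμ⟩ := I.toFinite.exists_maximal hne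
  have hI' := isLowerSet_sdiff_singleton hI hμ
  have ih := ih _ (hn ▸ Set.ncard_sdiff_singleton_lt_of_mem hμ.prop) _ hI' rfl
  have hstep := fun h => insert _ μ hI' (by simp) h ih
  simp only [Set.insert_sdiff_self_of_mem hμ.prop] at hstep
  exact hstep hI

end LowerSets

section Layers

variable {R : Type} [CommRing R] {A : Type} [Ring A] [Algebra R A] {V W : Ideal A}
  {M : Type} [AddCommGroup M] [Module R M] [Module A M] [IsScalarTower R A M]

/-- The submodule of the elements of `M` annihilated by the two-sided ideal `V`, that is
`Hom_A(A ⧸ V, M)`. -/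
def killedBy (V : Ideal A) [V.IsTwoSided] (M : Type) [AddCommGroup M] [Module A M] :
    Submodule A M where
  carrier := {m | ∀ v ∈ V, v • m = 0}
  add_mem' hx hy v hv := by rw [smul_add, hx v hv, hy v hv, add_zero]
  zero_mem' _ _ := smul_zero _
  smul_mem' a m hm v hv := by rw [← mul_smul, hm _ (V.mul_mem_right a hv)]

lemma killedBy_eq_top [V.IsTwoSided] (h : ∀ f : V →ₗ[A] M, f = 0) : killedBy V M = ⊤ :=
  eq_top_iff.2 fun m _ v hv =>
    LinearMap.congr_fun (h (LinearMap.toSpanSingleton A M m ∘ₗ V.subtype)) ⟨v, hv⟩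

lemma killedBy_eq_bot [V.IsTwoSided] (h : ∀ f : (A ⧸ V) →ₗ[A] M, f = 0) : killedBy V M = ⊥ := by
  refine eq_bot_iff.2 fun m hm => (Submodule.mem_bot A).2 ?_
  have hm1 : (1 : A) • m = 0 :=
    LinearMap.congr_fun (h (V.liftQ (LinearMap.toSpanSingleton A M m) hm)) (V.mkQ 1)
  rwa [one_smul] at hm1

lemma killedBy_anti [V.IsTwoSided] [W.IsTwoSided] (hWV : W ≤ V) : killedBy V M ≤ killedBy W M :=
  fun _ hm w hw => hm w (hWV hw)

lemma isTwoSided_of_hom_quotient_eq_zero (h : ∀ f : V →ₗ[A] A ⧸ V, f = 0) : V.IsTwoSided where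
  mul_mem_of_left {v} a hv := by
    have := LinearMap.congr_fun (h (V.mkQ ∘ₗ LinearMap.toSpanSingleton A A a ∘ₗ V.subtype)) ⟨v, hv⟩
    simpa using this

variable (R V W M) in
/-- The action of the subquotient `V ⧸ W` of `A` on the elements of `M` annihilated by `W`. -/
def layerAction [W.IsTwoSided] :
    killedBy W M →ₗ[R] (V ⧸ W.submoduleOf V) →ₗ[A] M where
  toFun m := (W.submoduleOf V).liftQ (LinearMap.toSpanSingleton A M m ∘ₗ V.subtype)
    fun v hv => m.2 v hv
  map_add' m m' := by
    ext v
    exact smul_add (v : A) (m : M) m'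
  map_smul' r m := by
    ext v
    exact smul_comm (v : A) r (m : M)

variable (V W) in
/-- Right multiplication by `a` on the subquotient `V ⧸ W` of `A`. -/
def layerRight [V.IsTwoSided] [W.IsTwoSided] (a : A) :
    (V ⧸ W.submoduleOf V) →ₗ[A] V ⧸ W.submoduleOf V :=
  (W.submoduleOf V).mapQ (W.submoduleOf V)
    ((LinearMap.toSpanSingleton A A a).restrict fun _ hv => V.mul_mem_right a hv)
    fun _ hv => W.mul_mem_right a hv

lemma layerAction_smul [V.IsTwoSided] [W.IsTwoSided] (a : A) (m : killedBy W M) :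
    layerAction R V W M (a • m) = layerAction R V W M m ∘ₗ layerRight V W a := by
  ext v
  exact (mul_smul (v : A) a (m : M)).symm

lemma layerAction_eq_zero_iff [V.IsTwoSided] [W.IsTwoSided] {m : killedBy W M} :
    layerAction R V W M m = 0 ↔ (m : M) ∈ killedBy V M := by
  refine ⟨fun hm v hv => LinearMap.congr_fun hm ((W.submoduleOf V).mkQ ⟨v, hv⟩), fun hm => ?_⟩
  ext v
  exact hm v v.2

lemma layerAction_surjective [W.IsTwoSided] (hWV : W ≤ V) (h : ExtOneVanishes A (A ⧸ V) M) :
    Function.Surjective (layerAction R V W M) := fun φ => by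
  obtain ⟨ψ, hψ⟩ := h.exists_extend V.subtype_injective (LinearMap.exact_subtype_mkQ V)
    (Submodule.mkQ_surjective V) (φ ∘ₗ (W.submoduleOf V).mkQ)
  have hψ1 (v : V) : (v : A) • ψ 1 = φ ((W.submoduleOf V).mkQ v) := by
    rw [← map_smul, smul_eq_mul, mul_one]
    exact LinearMap.congr_fun hψ v
  refine ⟨⟨ψ 1, fun w hw => ?_⟩, by ext v; exact hψ1 v⟩
  have hw0 : (W.submoduleOf V).mkQ ⟨w, hWV hw⟩ = 0 := (Submodule.Quotient.mk_eq_zero _).2 hw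
  rw [hψ1 ⟨w, hWV hw⟩, hw0, map_zero]

lemma exists_equiv_layerHom [V.IsTwoSided] [W.IsTwoSided] (hWV : W ≤ V)
    (hW : ∀ f : W →ₗ[A] M, f = 0) (hV : ∀ f : (A ⧸ V) →ₗ[A] M, f = 0)
    (hE : ExtOneVanishes A (A ⧸ V) M) :
    ∃ ρ : M ≃ₗ[R] ((V ⧸ W.submoduleOf V) →ₗ[A] M),
      ∀ a m, ρ (a • m) = ρ m ∘ₗ layerRight V W a := by
  have hinj : Function.Injective (layerAction R V W M) :=
    (injective_iff_map_eq_zero _).2 fun m hm => Subtype.ext <| by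
      simpa [killedBy_eq_bot hV] using layerAction_eq_zero_iff.1 hm
  let ε : M ≃ₗ[A] killedBy W M := (LinearEquiv.ofTop _ (killedBy_eq_top hW)).symm
  refine ⟨(ε.restrictScalars R).trans (.ofBijective _ ⟨hinj, layerAction_surjective hWV hE⟩),
    fun a m => ?_⟩
  exact (congrArg (layerAction R V W M) (ε.map_smul a m)).trans (layerAction_smul a (ε m))

lemma InAdd.exists_killedBy_tensor {D N : Type} [AddCommGroup D] [Module R D] [Module A D]
    [IsScalarTower R A D] [AddCommGroup N] [Module R N] [Module A N] [IsScalarTower R A N]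
    [V.IsTwoSided] [W.IsTwoSided] (hWV : W ≤ V) (hL : InAdd A D (V ⧸ W.submoduleOf V))
    (hD : Function.Surjective (algebraMap R (Module.End A D))) (e : (D →ₗ[A] N) ≃ₗ[R] R)
    (hWN : ∀ f : W →ₗ[A] N, f = 0) (hVN : ∀ f : (A ⧸ V) →ₗ[A] N, f = 0)
    (hEN : ExtOneVanishes A (A ⧸ V) N) (hEM : ExtOneVanishes A (A ⧸ V) M) :
    ∃ F : killedBy W M →ₗ[A] N ⊗[R] (D →ₗ[A] M), Function.Surjective F ∧
      LinearMap.ker F = (killedBy V M).submoduleOf (killedBy W M) := by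
  obtain ⟨ρ, hρ⟩ := exists_equiv_layerHom (R := R) hWV hWN hVN hEN
  obtain ⟨Φ, hΦ⟩ := hL.exists_tensor_equiv (M := M) hD e ρ _ hρ
  let F : killedBy W M →ₗ[A] N ⊗[R] (D →ₗ[A] M) :=
    { toFun m := Φ.symm (layerAction R V W M m)
      map_add' m m' := by rw [map_add, map_add]
      map_smul' a m := Φ.injective (by simp [hΦ, layerAction_smul]) }
  refine ⟨F, Φ.symm.surjective.comp (layerAction_surjective hWV hEM), ?_⟩
  ext m
  exact Φ.symm.map_eq_zero_iff.trans layerAction_eq_zero_iff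

end Layers

section QuotientFiltrations

variable {A : Type u} [Ring A] {Q : ∀ (Z : Type v) [AddCommGroup Z] [Module A Z], Prop}
  {X Y Z : Type v} [AddCommGroup X] [Module A X] [AddCommGroup Y] [Module A Y]
  [AddCommGroup Z] [Module A Z] {i : Y →ₗ[A] X} {p : X →ₗ[A] Z} {V : Submodule A Y}

lemma Filt.quotient_map (hi : Function.Injective i) (hip : Function.Exact i p)
    (hp : Function.Surjective p) (hV : Filt A Q (Y ⧸ V)) (hZ : Filt A Q Z) :
    Filt A Q (X ⧸ V.map i) := by
  have hVp : V.map i ≤ LinearMap.ker p :=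
    hip.linearMap_ker_eq ▸ LinearMap.map_le_range
  refine of_exact (i := V.mapQ (V.map i) i (V.le_comap_map i)) (p := (V.map i).liftQ p hVp)
    ?_ ?_ ?_ hV hZ
  · refine LinearMap.ker_eq_bot.1 (Submodule.ker_liftQ_eq_bot _ _ _ ?_)
    rw [LinearMap.ker_comp, Submodule.ker_mkQ, Submodule.comap_map_eq_of_injective hi]
  · refine ((V.map i).mkQ_surjective.forall).2 fun x => (hip x).trans ⟨?_, ?_⟩
    · rintro ⟨y, rfl⟩
      exact ⟨V.mkQ y, rfl⟩
    · rintro ⟨y, hy⟩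
      obtain ⟨y, rfl⟩ := V.mkQ_surjective y
      rw [← hip x]
      have := hip.apply_apply_eq_zero y
      exact (congrArg ((V.map i).liftQ p hVp) hy).symm.trans this
  · exact .of_comp (g := (V.map i).mkQ) hp

end QuotientFiltrations

section Summands

lemma inAdd_self_of_finite_of_projective {A : Type} [Ring A] (Q : Type) [AddCommGroup Q]
    [Module A Q] [Module.Finite A Q] [Module.Projective A Q] : InAdd A A Q := by
  obtain ⟨n, f, hf⟩ := Module.Finite.exists_fin' A Q
  obtain ⟨g, hg⟩ := Module.projective_lifting_property f LinearMap.id hf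
  exact ⟨n, g, f, hg⟩

variable {R : Type} [CommRing R] {A : Type} [Ring A] [Algebra R A]
  {D U M Z : Type} [AddCommGroup D] [Module A D] [AddCommGroup U] [Module R U]
  [AddCommGroup M] [Module R M] [Module A M] [IsScalarTower R A M] [AddCommGroup Z] [Module A Z]

lemma InAdd.tensor [Module R D] [IsScalarTower R A D] (h : InAdd R R U) :
    InAdd A D (D ⊗[R] U) := by
  obtain ⟨n, s, r, hrs⟩ := h.exists_sum_eq_id
  let e := TensorProduct.AlgebraTensorModule.rid R A D
  refine .of_sum_eq_id
    (s := fun k => e.toLinearMap ∘ₗ TensorProduct.AlgebraTensorModule.lTensor A D (s k))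
    (r := fun k => TensorProduct.AlgebraTensorModule.lTensor A D (r k) ∘ₗ e.symm.toLinearMap) ?_
  have hk (k : Fin n) :
      (TensorProduct.AlgebraTensorModule.lTensor A D (r k) ∘ₗ e.symm.toLinearMap) ∘ₗ
        e.toLinearMap ∘ₗ TensorProduct.AlgebraTensorModule.lTensor A D (s k) =
      TensorProduct.AlgebraTensorModule.lTensor A D (r k ∘ₗ s k) := by
    ext; simp
  simp only [hk, ← map_sum, hrs]
  ext; simp

variable (R M) in
lemma InAdd.hom (h : InAdd A D Z) : InAdd R (D →ₗ[A] M) (Z →ₗ[A] M) := by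
  obtain ⟨n, s, r, hrs⟩ := h.exists_sum_eq_id
  refine .of_sum_eq_id (s := fun k => LinearMap.lcomp R M (r k))
    (r := fun k => LinearMap.lcomp R M (s k)) ?_
  ext f z
  simpa using congrArg f (LinearMap.congr_fun hrs z)

lemma InAdd.finite [Module.Finite A D] (h : InAdd A D Z) : Module.Finite A Z := by
  obtain ⟨n, s, r, hrs⟩ := h
  exact .of_surjective r fun z => ⟨s z, LinearMap.congr_fun hrs z⟩

lemma InAdd.projective [Module.Projective A D] (h : InAdd A D Z) : Module.Projective A Z := by
  obtain ⟨n, s, r, hrs⟩ := h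
  have : Module.Projective A (Fin n → D) :=
    .of_equiv (DFinsupp.linearEquivFunOnFintype (R := A) (M := fun _ : Fin n => D))
  exact .of_split s r hrs

end Summands

section StandardSystems

variable (R : Type) [CommRing R] (A : Type) [Ring A] [Algebra R A] {Λ : Type}
  (D N : Λ → Type) [∀ l, AddCommGroup (D l)] [∀ l, Module R (D l)]
  [∀ l, Module A (D l)] [∀ l, IsScalarTower R A (D l)] [∀ l, AddCommGroup (N l)]
  [∀ l, Module R (N l)] [∀ l, Module A (N l)] [∀ l, IsScalarTower R A (N l)]

/-- The properties of the standard modules of a split quasi-hereditary algebra, expressed without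
projective modules, which are needed to construct ideals of `A` from a filtration of `A`. -/
structure IsStandardSystem [PartialOrder Λ] : Prop where
  hom_eq_zero : ∀ l m : Λ, ¬ l ≤ m → ∀ f : D l →ₗ[A] D m, f = 0
  ext : ∀ l m : Λ, ¬ l < m → ExtOneVanishes A (D l) (D m)
  end_surjective : ∀ l, Function.Surjective (algebraMap R (Module.End A (D l)))
  filt_self : Filt A (AddFactor A D Set.univ) A

/-- The modules `N(λ)` are orthogonal to the modules `D(λ)` in degrees `0` and `1`, as costandard
modules are to standard modules. -/
structure IsOrthogonalSystem : Prop where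
  equiv : ∀ l, Nonempty ((D l →ₗ[A] N l) ≃ₗ[R] R)
  hom_eq_zero : ∀ l m, l ≠ m → ∀ f : D l →ₗ[A] N m, f = 0
  ext : ∀ l m, ExtOneVanishes A (D l) (N m)

variable {R A D N} {S : Set Λ} {X : Type} [AddCommGroup X]
  [Module A X]

lemma IsCostandard.isOrthogonalSystem [PartialOrder Λ] (h : IsCostandard R A Λ D N) :
    IsOrthogonalSystem R A D N where
  equiv := h.2.1
  hom_eq_zero := h.2.2.1
  ext l m := extOneVanishes_of_extVanish (h.2.2.2 l m 1 one_pos)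

lemma TensorFactor.addFactor (h : TensorFactor R A Λ D S X) : AddFactor A D S X :=
  have := h.fin
  have := h.proj
  ⟨h.lam, h.mem, (inAdd_self_of_finite_of_projective h.U).tensor.of_equiv h.iso.symm⟩

lemma InFilt.filt (h : InFilt R A Λ D S X) : Filt A (AddFactor A D S) X := by
  obtain ⟨-, n, c, h0, h1, hc, hQ⟩ := h
  exact .of_chain h0 h1 hc fun i => (hQ i).some.addFactor

namespace SplitQH

variable [PartialOrder Λ] (h : SplitQH R A Λ D)
include h

lemma hom_eq_zero (l m : Λ) (hlm : ¬ l ≤ m) (f : D l →ₗ[A] D m) : f = 0 := by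
  by_contra hf
  exact hlm (h.hom_le l m ⟨f, hf⟩)

lemma extOneVanishes (l m : Λ) (hlm : ¬ l < m) : ExtOneVanishes A (D l) (D m) := by
  have := h.P_proj l
  refine .of_forall_exists_extend (Submodule.subtype_injective _)
    (LinearMap.exact_subtype_ker_map _) (h.epi_surj l) fun φ => ⟨0, ?_⟩
  rw [(h.ker_filt l).filt.addFactor_hom_eq_zero_left (fun k hk =>
    h.hom_eq_zero k m fun hkm => hlm (lt_of_lt_of_le hk hkm)) φ, LinearMap.zero_comp]

lemma filt_P (l : Λ) : Filt A (AddFactor A D Set.univ) (h.P l) :=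
  .step (Submodule.subtype_injective _) (LinearMap.exact_subtype_ker_map _) (h.epi_surj l)
    ((h.ker_filt l).filt.mono_addFactor (Set.subset_univ _)) ⟨l, trivial, .refl A (D l)⟩

lemma isStandardSystem [Finite Λ] : IsStandardSystem R A D where
  hom_eq_zero := h.hom_eq_zero
  ext := h.extOneVanishes
  end_surjective l f := by
    obtain ⟨e⟩ := h.endIso l
    exact ⟨e f, e.injective (by simp)⟩
  filt_self := by
    obtain ⟨n, hn⟩ := h.add_gen (ModuleCat.of A A) (inferInstanceAs (Module.Finite A A))
      (inferInstanceAs (Module.Projective A A))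
    exact .of_isDirectSummand h.hom_eq_zero h.extOneVanishes hn (.pi fun _ => .pi h.filt_P)

end SplitQH

end StandardSystems

section StratifyingIdeals

variable {R : Type} [CommRing R] {A : Type} [Ring A] [Algebra R A] {Λ : Type} [PartialOrder Λ]
  {D N : Λ → Type} [∀ l, AddCommGroup (D l)] [∀ l, Module R (D l)]
  [∀ l, Module A (D l)] [∀ l, IsScalarTower R A (D l)] [∀ l, AddCommGroup (N l)]
  [∀ l, Module R (N l)] [∀ l, Module A (N l)] [∀ l, IsScalarTower R A (N l)]
  {I : Set Λ} {μ : Λ} {V W : Ideal A}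
  {X : Type} [AddCommGroup X] [Module A X]

/-- The left ideal `V` cuts a filtration of `A` by the modules `D(λ)` into the part with `λ ∉ I`
and the part with `λ ∈ I`. -/
structure IsStratifyingIdeal (A : Type) [Ring A] {Λ : Type} (D : Λ → Type)
    [∀ l, AddCommGroup (D l)] [∀ l, Module A (D l)] (I : Set Λ) (V : Ideal A) : Prop where
  filt : Filt A (AddFactor A D Iᶜ) V
  filt_quotient : Filt A (AddFactor A D I) (A ⧸ V)

namespace IsStandardSystem

variable (hD : IsStandardSystem R A D)
include hD

lemma isStratifyingIdeal_top : IsStratifyingIdeal A D ∅ (⊤ : Ideal A) where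
  filt := (hD.filt_self.of_equiv Submodule.topEquiv.symm).mono_addFactor (by simp)
  filt_quotient := .zero _

lemma isTwoSided (hI : IsLowerSet I) (hV : IsStratifyingIdeal A D I V) : V.IsTwoSided :=
  isTwoSided_of_hom_quotient_eq_zero <| hV.filt.addFactor_hom_eq_zero_left fun l hl =>
    hV.filt_quotient.addFactor_hom_eq_zero_right fun m hm =>
      hD.hom_eq_zero l m fun hlm => hl (hI hlm hm)

lemma exists_layer (hI : IsLowerSet (insert μ I))
    (hV : IsStratifyingIdeal A D I V) :
    ∃ W ≤ V, IsStratifyingIdeal A D (insert μ I) W ∧ InAdd A (D μ) (V ⧸ W.submoduleOf V) := by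
  have hmin (ν : Λ) (hν : ν ∈ Iᶜ) : ¬ ν < μ := fun hlt =>
    (hI hlt.le (Set.mem_insert μ I)).elim hlt.ne hν
  obtain ⟨W, hW, hVW⟩ := hV.filt.exists_submodule_of_minimal hD.ext hmin
  have hWV : (W.map V.subtype).submoduleOf V = W :=
    Submodule.comap_map_eq_of_injective V.subtype_injective W
  refine ⟨W.map V.subtype, V.map_subtype_le W, ⟨?_, ?_⟩, hWV.symm ▸ hVW⟩
  · rw [Set.insert_eq, Set.union_comm, Set.compl_union]
    exact hW.of_equiv (W.equivMapOfInjective _ V.subtype_injective)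
  · exact .quotient_map V.subtype_injective (LinearMap.exact_subtype_mkQ V) V.mkQ_surjective
      (.of_factor ⟨μ, Set.mem_insert μ I, hVW⟩)
      (hV.filt_quotient.mono_addFactor (Set.subset_insert μ I))

end IsStandardSystem

/-- `Z` is isomorphic to `N(λ) ⊗_R Hom_A(D(λ), M)` for some `λ ∈ I`. -/
def HomTensorFactor (R : Type) [CommRing R] {A : Type} [Ring A] [Algebra R A] {Λ : Type}
    (D N : Λ → Type) [∀ l, AddCommGroup (D l)] [∀ l, Module A (D l)] [∀ l, AddCommGroup (N l)]
    [∀ l, Module R (N l)] [∀ l, Module A (N l)] [∀ l, IsScalarTower R A (N l)] (M : Type)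
    [AddCommGroup M] [Module R M] [Module A M] [IsScalarTower R A M] (I : Set Λ)
    (Z : Type) [AddCommGroup Z] [Module A Z] : Prop :=
  ∃ l ∈ I, Nonempty (Z ≃ₗ[A] N l ⊗[R] (D l →ₗ[A] M))

namespace IsOrthogonalSystem

variable (hN : IsOrthogonalSystem R A D N)
include hN

omit [PartialOrder Λ] [∀ l, Module R (D l)] [∀ l, IsScalarTower R A (D l)] in
lemma hom_eq_zero_of_filt (h : Filt A (AddFactor A D I) X) (hμ : μ ∉ I) (f : X →ₗ[A] N μ) :
    f = 0 :=
  h.addFactor_hom_eq_zero_left (fun l hl => hN.hom_eq_zero l μ (by rintro rfl; exact hμ hl)) f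

variable (hD : IsStandardSystem R A D)
include hD

variable {M : Type} [AddCommGroup M] [Module R M] [Module A M] [IsScalarTower R A M]

lemma exists_killedBy_tensor_of_layer [V.IsTwoSided] [W.IsTwoSided] (hμ : μ ∉ I) (hWV : W ≤ V)
    (hV : IsStratifyingIdeal A D I V) (hW : IsStratifyingIdeal A D (insert μ I) W)
    (hVW : InAdd A (D μ) (V ⧸ W.submoduleOf V)) (hM : ∀ l, ExtOneVanishes A (D l) M) :
    ∃ F : killedBy W M →ₗ[A] N μ ⊗[R] (D μ →ₗ[A] M), Function.Surjective F ∧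
      LinearMap.ker F = (killedBy V M).submoduleOf (killedBy W M) :=
  hVW.exists_killedBy_tensor (M := M) hWV (hD.end_surjective μ) (hN.equiv μ).some
    (hN.hom_eq_zero_of_filt hW.filt (by simp)) (hN.hom_eq_zero_of_filt hV.filt_quotient hμ)
    (hV.filt_quotient.addFactor_extOneVanishes_left fun l _ => hN.ext l μ)
    (hV.filt_quotient.addFactor_extOneVanishes_left fun l _ => hM l)

lemma exists_filt_killedBy [Finite Λ] (hM : ∀ l, ExtOneVanishes A (D l) M) (hI : IsLowerSet I) :
    ∃ (V : Ideal A) (_ : V.IsTwoSided), IsStratifyingIdeal A D I V ∧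
      Filt A (HomTensorFactor R D N M I) (killedBy V M) := by
  induction I, hI using isLowerSet_induction with
  | empty =>
    have := killedBy_eq_bot (V := (⊤ : Ideal A)) (M := M) fun f => Subsingleton.elim f 0
    exact ⟨⊤, inferInstance, hD.isStratifyingIdeal_top, this ▸ .zero _⟩
  | insert I μ _ hμ hI' ih =>
    obtain ⟨V, _, hV, hVM⟩ := ih
    obtain ⟨W, hWV, hW, hVW⟩ := hD.exists_layer hI' hV
    have := hD.isTwoSided hI' hW
    obtain ⟨F, hF, hker⟩ := hN.exists_killedBy_tensor_of_layer hD hμ hWV hV hW hVW hM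
    refine ⟨W, this, hW, .step (Submodule.subtype_injective _) (LinearMap.exact_subtype_ker_map F)
      hF ?_ ⟨μ, Set.mem_insert μ I, ⟨.refl A _⟩⟩⟩
    rw [hker]
    exact (hVM.mono fun _ _ _ ⟨l, hl, e⟩ => ⟨l, Set.mem_insert_of_mem μ hl, e⟩).of_equiv
      (Submodule.submoduleOfEquivOfLe (killedBy_anti hWV)).symm

lemma exists_surjective_of_filt [Finite Λ] (hM : ∀ l, ExtOneVanishes A (D l) M)
    (hI : IsLowerSet I) (hμ : μ ∉ I) (hI' : IsLowerSet (insert μ I))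
    (h : Filt A (AddFactor A D (insert μ I)) M) :
    ∃ g : M →ₗ[A] N μ ⊗[R] (D μ →ₗ[A] M), Function.Surjective g ∧
      Filt A (HomTensorFactor R D N M I) (LinearMap.ker g) := by
  obtain ⟨V, _, hV, hVM⟩ := hN.exists_filt_killedBy hD hM hI
  obtain ⟨W, hWV, hW, hVW⟩ := hD.exists_layer hI' hV
  have := hD.isTwoSided hI' hW
  obtain ⟨F, hF, hker⟩ := hN.exists_killedBy_tensor_of_layer hD hμ hWV hV hW hVW hM
  have hWM : killedBy W M = ⊤ := killedBy_eq_top <| hW.filt.addFactor_hom_eq_zero_left fun k hk =>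
    h.addFactor_hom_eq_zero_right fun m hm => hD.hom_eq_zero k m fun hkm => hk (hI' hkm hm)
  let e := LinearEquiv.ofTop _ hWM
  refine ⟨F ∘ₗ e.symm.toLinearMap, hF.comp e.symm.surjective, ?_⟩
  have hker' : LinearMap.ker (F ∘ₗ e.symm.toLinearMap) = killedBy V M := by
    rw [LinearMap.ker_comp, hker]
    rfl
  exact hker' ▸ hVM

lemma finite [Finite Λ] (l : Λ) : Module.Finite R (N l) := by
  obtain ⟨V, _, hV, -⟩ := hN.exists_filt_killedBy hD (fun m => hN.ext m l) (isLowerSet_Iio l)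
  have hI : IsLowerSet (insert l (Set.Iio l)) := Set.Iio_insert (a := l) ▸ isLowerSet_Iic l
  obtain ⟨W, hWV, hW, hVW⟩ := hD.exists_layer hI hV
  have := hD.isTwoSided hI hW
  obtain ⟨ρ, -⟩ := exists_equiv_layerHom (R := R) hWV (hN.hom_eq_zero_of_filt hW.filt (by simp))
    (hN.hom_eq_zero_of_filt hV.filt_quotient (by simp))
    (hV.filt_quotient.addFactor_extOneVanishes_left fun m _ => hN.ext m l)
  have : Module.Finite R (D l →ₗ[A] N l) := .equiv (hN.equiv l).some.symm
  have := (InAdd.hom R (N l) hVW).finite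
  exact .equiv ρ.symm

end IsOrthogonalSystem

end StratifyingIdeals

section HomProjective

lemma exists_module_isScalarTower (R : Type*) [CommRing R] (A : Type*) [Ring A] [Algebra R A]
    (M : Type*) [AddCommGroup M] [Module A M] : ∃ _ : Module R M, IsScalarTower R A M :=
  letI := Module.compHom M (algebraMap R A)
  ⟨inferInstance, .of_algebraMap_smul fun _ _ => rfl⟩

lemma nonempty_equiv_prod_of_projective {R X Y Z : Type*} [Ring R] [AddCommGroup X] [Module R X]
    [AddCommGroup Y] [Module R Y] [AddCommGroup Z] [Module R Z] [Module.Projective R Z]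
    {i : X →ₗ[R] Y} {p : Y →ₗ[R] Z} (hi : Function.Injective i) (hip : Function.Exact i p)
    (hp : Function.Surjective p) : Nonempty (Y ≃ₗ[R] X × Z) := by
  obtain ⟨s, hs⟩ := Module.projective_lifting_property p LinearMap.id hp
  exact ⟨(hip.splitSurjectiveEquiv hi ⟨s, hs⟩).1⟩

variable {R : Type} [CommRing R] {A : Type} [Ring A] [Algebra R A]
  {M : Type} [AddCommGroup M] [Module R M] [Module A M] [IsScalarTower R A M]

lemma nonempty_hom_equiv_prod_of_projective {X Y Z : Type} [AddCommGroup X] [Module A X]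
    [AddCommGroup Y] [Module A Y] [AddCommGroup Z] [Module A Z] {i : X →ₗ[A] Y} {p : Y →ₗ[A] Z}
    [Module.Projective R (X →ₗ[A] M)] (hi : Function.Injective i) (hip : Function.Exact i p)
    (hp : Function.Surjective p) (hZ : ExtOneVanishes A Z M) :
    Nonempty ((Y →ₗ[A] M) ≃ₗ[R] (Z →ₗ[A] M) × (X →ₗ[A] M)) := by
  refine nonempty_equiv_prod_of_projective (i := LinearMap.lcomp R M p)
    (p := LinearMap.lcomp R M i) (fun f g hfg => (LinearMap.cancel_right hp).1 hfg)
    (fun f => ⟨fun hf => ?_, ?_⟩) (hZ.exists_extend hi hip hp)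
  · exact exists_comp_eq_of_ker_le hp
      (hip.linearMap_ker_eq.trans_le (LinearMap.range_le_ker_iff.2 hf))
  · rintro ⟨g, rfl⟩
    exact (LinearMap.comp_assoc ..).trans (by rw [hip.linearMap_comp_eq_zero, LinearMap.comp_zero])

lemma inAdd_hom_of_projective (hM : InAdd R R M) (Q : Type) [AddCommGroup Q] [Module A Q]
    [Module.Finite A Q] [Module.Projective A Q] : InAdd R R (Q →ₗ[A] M) :=
  (hM.of_equiv (LinearMap.ringLmapEquivSelf A R M).symm).trans
    ((inAdd_self_of_finite_of_projective Q).hom R M)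

variable {Λ : Type} {D : Λ → Type} [∀ l, AddCommGroup (D l)] [∀ l, Module A (D l)]

lemma Filt.inAdd_hom {S : Set Λ} {X : Type} [AddCommGroup X] [Module A X]
    (h : Filt A (AddFactor A D S) X) (hD : ∀ l ∈ S, ExtOneVanishes A (D l) M)
    (hDM : ∀ l ∈ S, InAdd R R (D l →ₗ[A] M)) : InAdd R R (X →ₗ[A] M) := by
  induction h with
  | zero X => exact .of_subsingleton R R (X →ₗ[A] M)
  | step hi hip hp _ hZ ih =>
    obtain ⟨l, hl, hZ⟩ := hZ
    have := ih.projective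
    obtain ⟨e⟩ := nonempty_hom_equiv_prod_of_projective (R := R) (M := M) hi hip hp
      (hZ.extOneVanishes_left (hD l hl))
    exact (((hDM l hl).trans (hZ.hom R M)).prod ih).of_equiv e.symm

variable [∀ l, Module R (D l)] [∀ l, IsScalarTower R A (D l)]

lemma Filt.inAdd_of_isScalarTower {S : Set Λ} {X : Type} [AddCommGroup X] [Module A X]
    (h : Filt A (AddFactor A D S) X) (hD : ∀ l ∈ S, InAdd R R (D l)) :
    ∀ [Module R X] [IsScalarTower R A X], InAdd R R X := by
  induction h with
  | zero X => exact .of_subsingleton R R X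
  | @step Y X Z _ _ _ _ _ _ i p hi hip hp _ hZ ih =>
    intro _ _
    obtain ⟨_, _⟩ := exists_module_isScalarTower R A Y
    obtain ⟨_, _⟩ := exists_module_isScalarTower R A Z
    obtain ⟨l, hl, n, s, r, hrs⟩ := hZ
    have hZ : InAdd R (D l) Z := ⟨n, s.restrictScalars R, r.restrictScalars R,
      LinearMap.ext fun z => LinearMap.congr_fun hrs z⟩
    have hZR := (hD l hl).trans hZ
    have := hZR.projective
    obtain ⟨e⟩ := nonempty_equiv_prod_of_projective (i := i.restrictScalars R)
      (p := p.restrictScalars R) hi hip hp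
    exact (ih.prod hZR).of_equiv e.symm

lemma SplitQH.inAdd_hom [Finite Λ] [PartialOrder Λ] (h : SplitQH R A Λ D) (hM : InAdd R R M)
    (l : Λ) (hl : ∀ m, l ≤ m → ExtOneVanishes A (D m) M) : InAdd R R (D l →ₗ[A] M) := by
  induction l using (wellFounded_gt (α := Λ)).induction with | _ l ih
  have := h.P_fin l
  have := h.P_proj l
  have hker := (h.ker_filt l).filt.inAdd_hom (R := R) (fun m hm => hl m hm.le) fun m hm =>
    ih m hm fun k hk => hl k (hm.le.trans hk)
  have := hker.projective
  obtain ⟨e⟩ := nonempty_hom_equiv_prod_of_projective (R := R) (M := M)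
    (Submodule.subtype_injective _) (LinearMap.exact_subtype_ker_map (h.epi l)) (h.epi_surj l)
    (hl l le_rfl)
  refine ((inAdd_hom_of_projective hM (h.P l)).of_equiv e).of_isDirectSummand
    ⟨LinearMap.inl R _ _, LinearMap.fst R _ _, LinearMap.fst_comp_inl ..⟩

end HomProjective

section UniversalExtension

lemma exists_pushout {A : Type u} [Ring A] {N X Y Z : Type v} [AddCommGroup N] [Module A N]
    [AddCommGroup X] [Module A X] [AddCommGroup Y] [Module A Y] [AddCommGroup Z] [Module A Z]
    {i : X →ₗ[A] Y} {p : Y →ₗ[A] Z} (hi : Function.Injective i) (hip : Function.Exact i p)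
    (hp : Function.Surjective p) (θ : X →ₗ[A] N) :
    ∃ (E : ModuleCat.{v} A) (f : N →ₗ[A] E) (g : E →ₗ[A] Z) (α : Y →ₗ[A] E),
      Function.Injective f ∧ Function.Exact f g ∧ Function.Surjective g ∧ α ∘ₗ i = f ∘ₗ θ := by
  let V : Submodule A (N × Y) := LinearMap.range (θ.prod (-i))
  have hV : V ≤ LinearMap.ker (p ∘ₗ LinearMap.snd A N Y) := by
    rintro _ ⟨x, rfl⟩
    simp [hip.apply_apply_eq_zero]
  refine ⟨.of A ((N × Y) ⧸ V), V.mkQ ∘ₗ LinearMap.inl A N Y, V.liftQ _ hV,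
    V.mkQ ∘ₗ LinearMap.inr A N Y, ?_, ?_, fun z => ?_, ?_⟩
  · refine (injective_iff_map_eq_zero _).2 fun y hy => ?_
    obtain ⟨x, hx⟩ := (Submodule.Quotient.mk_eq_zero V).1 hy
    obtain ⟨rfl, hix⟩ : θ x = y ∧ i x = 0 := by simpa using hx
    rw [(map_eq_zero_iff i hi).1 hix, map_zero]
  · refine V.mkQ_surjective.forall.2 fun ⟨n, y⟩ => (hip y).trans ⟨?_, ?_⟩
    · rintro ⟨x, rfl⟩
      exact ⟨n + θ x, (Submodule.Quotient.eq V).2 ⟨x, by simp⟩⟩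
    · rintro ⟨m, hm⟩
      obtain ⟨x, hx⟩ := (Submodule.Quotient.eq V).1 hm
      exact ⟨x, by simpa using congrArg Prod.snd hx⟩
  · obtain ⟨y, rfl⟩ := hp z
    exact ⟨V.mkQ (0, y), rfl⟩
  · ext x
    exact ((Submodule.Quotient.eq V).2 ⟨-x, by simp⟩)

lemma exact_compLeft {A : Type*} [Ring A] {X Y Z : Type*} [AddCommGroup X] [Module A X]
    [AddCommGroup Y] [Module A Y] [AddCommGroup Z] [Module A Z] {i : X →ₗ[A] Y} {p : Y →ₗ[A] Z}
    (hip : Function.Exact i p) (ι : Type*) : Function.Exact (i.compLeft ι) (p.compLeft ι) := by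
  rw [LinearMap.exact_iff, LinearMap.ker_compLeft, LinearMap.range_compLeft,
    hip.linearMap_ker_eq]

variable {R : Type} [CommRing R] {A : Type} [Ring A] [Algebra R A]
  {D K P T : Type} [AddCommGroup D] [Module A D] [AddCommGroup K] [Module A K]
  [AddCommGroup P] [Module A P] [AddCommGroup T] [Module R T] [Module A T] [IsScalarTower R A T]
  {i : K →ₗ[A] P} {p : P →ₗ[A] D}

lemma exists_comp_eq_of_mem_span {N : Type} [AddCommGroup N] [Module A N] {S : Set (K →ₗ[A] T)}
    {f : T →ₗ[A] N} (h : ∀ φ ∈ S, ∃ β : P →ₗ[A] N, β ∘ₗ i = f ∘ₗ φ) {θ : K →ₗ[A] T}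
    (hθ : θ ∈ Submodule.span R S) : ∃ β : P →ₗ[A] N, β ∘ₗ i = f ∘ₗ θ := by
  obtain ⟨_, _⟩ := exists_module_isScalarTower R A N
  induction hθ using Submodule.span_induction with
  | mem θ hθ => exact h θ hθ
  | zero => exact ⟨0, by simp⟩
  | add θ θ' _ _ ih ih' =>
    obtain ⟨β, hβ⟩ := ih
    obtain ⟨β', hβ'⟩ := ih'
    exact ⟨β + β', by rw [LinearMap.add_comp, hβ, hβ', LinearMap.comp_add]⟩
  | smul r θ _ ih =>
    obtain ⟨β, hβ⟩ := ih
    refine ⟨r • β, LinearMap.ext fun x => ?_⟩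
    exact (congrArg (r • ·) (LinearMap.congr_fun hβ x)).trans
      (f.map_smul_of_tower r (θ x)).symm

/- The extension is the pushout of `0 → Kⁿ → Pⁿ → Dⁿ → 0` along a map `Kⁿ → T` whose components
generate `Hom_A(K, T)`. -/
lemma exists_universal_extension [Module.Projective A P] [Module.Finite R (K →ₗ[A] T)]
    (hi : Function.Injective i) (hip : Function.Exact i p) (hp : Function.Surjective p)
    (hD : ExtOneVanishes A D D) :
    ∃ (E : ModuleCat.{0} A) (n : ℕ) (f : T →ₗ[A] E) (g : E →ₗ[A] Fin n → D),
      Function.Injective f ∧ Function.Exact f g ∧ Function.Surjective g ∧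
        ExtOneVanishes A D E := by
  obtain ⟨n, φ, hφ⟩ := Module.Finite.exists_fin (R := R) (M := K →ₗ[A] T)
  obtain ⟨E, f, g, α, hf, hfg, hg, hα⟩ := exists_pushout (hi.comp_left (α := Fin n))
    (exact_compLeft hip (Fin n)) hp.comp_left (LinearMap.lsum A (fun _ => K) ℕ φ)
  have hφα (k : Fin n) : (α ∘ₗ LinearMap.single A (fun _ => P) k) ∘ₗ i = f ∘ₗ φ k := by
    ext x
    have hsingle : i.compLeft (Fin n) (Pi.single k x) = Pi.single k (i x) :=
      (Pi.single_op (fun _ => i) (fun _ => map_zero i) k x).symm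
    have := LinearMap.congr_fun hα (Pi.single k x)
    rwa [LinearMap.comp_apply, LinearMap.comp_apply, hsingle, LinearMap.lsum_piSingle] at this
  refine ⟨E, n, f, g, hf, hfg, hg, .of_forall_exists_extend hi hip hp fun χ => ?_⟩
  have hDn : ExtOneVanishes A D (Fin n → D) :=
    InAdd.extOneVanishes_right ⟨n, .id, .id, rfl⟩ hD
  obtain ⟨ψ', hψ⟩ := hDn.exists_extend hi hip hp (g ∘ₗ χ)
  obtain ⟨ψ, rfl⟩ := Module.projective_lifting_property g ψ' hg
  obtain ⟨θ, hθ⟩ := exists_comp_eq_of_range_le hf (f := χ - ψ ∘ₗ i) (by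
    rw [← hfg.linearMap_ker_eq, LinearMap.range_le_ker_iff, LinearMap.comp_sub, ← hψ,
      LinearMap.comp_assoc, sub_self])
  obtain ⟨β, hβ⟩ := exists_comp_eq_of_mem_span (R := R) (f := f) (i := i)
    (Set.forall_mem_range.2 fun k => ⟨_, hφα k⟩) (hφ ▸ Submodule.mem_top : θ ∈ _)
  exact ⟨ψ + β, by rw [LinearMap.add_comp, hβ, hθ, add_sub_cancel]⟩

namespace SplitQH

variable {Λ : Type} [PartialOrder Λ] {D : Λ → Type} [∀ l, AddCommGroup (D l)]
  [∀ l, Module R (D l)] [∀ l, Module A (D l)] [∀ l, IsScalarTower R A (D l)]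
  (h : SplitQH R A Λ D)
include h

lemma inAdd_of_filt {S : Set Λ} (hT : Filt A (AddFactor A D S) T) : InAdd R R T :=
  hT.inAdd_of_isScalarTower fun l _ =>
    have := h.deltaFinR l
    have := h.deltaProjR l
    inAdd_self_of_finite_of_projective (D l)

lemma exists_extension_of_insert [Finite Λ] {E : Set Λ} {μ : Λ} (hE : IsLowerSet E) (hμ : μ ∉ E)
    (hE' : IsLowerSet (insert μ E)) (hT : Filt A (AddFactor A D Set.univ) T)
    (hext : ∀ l ∉ insert μ E, ExtOneVanishes A (D l) T) :
    ∃ (T' : ModuleCat.{0} A) (n : ℕ) (f : T →ₗ[A] T') (g : T' →ₗ[A] Fin n → D μ),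
      Function.Injective f ∧ Function.Exact f g ∧ Function.Surjective g ∧
        ∀ l ∉ E, ExtOneVanishes A (D l) T' := by
  have hlt (m : Λ) (hm : μ < m) : ExtOneVanishes A (D m) T :=
    hext m fun hm' => hμ (hE hm.le (hm'.resolve_left hm.ne'))
  have := h.P_proj μ
  have : Module.Finite R (LinearMap.ker (h.epi μ) →ₗ[A] T) :=
    ((h.ker_filt μ).filt.inAdd_hom hlt fun m hm =>
      h.inAdd_hom (h.inAdd_of_filt hT) m fun k hk => hlt k (lt_of_lt_of_le hm hk)).finite
  obtain ⟨T', n, f, g, hf, hfg, hg, hT'⟩ := exists_universal_extension (R := R) (T := T)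
    (Submodule.subtype_injective _) (LinearMap.exact_subtype_ker_map (h.epi μ)) (h.epi_surj μ)
    (h.extOneVanishes μ μ (lt_irrefl μ))
  refine ⟨T', n, f, g, hf, hfg, hg, fun l hl => ?_⟩
  obtain rfl | hne := eq_or_ne l μ
  · exact hT'
  have hl' : l ∉ insert μ E := fun hl' => hl'.elim hne hl
  exact .of_exact_right hf hfg hg (hext l hl') <| InAdd.extOneVanishes_right ⟨n, .id, .id, rfl⟩
    (h.extOneVanishes l μ fun hlμ => hl' (hE' hlμ.le (Set.mem_insert μ E)))

lemma exists_extension [Finite Λ] {E : Set Λ} (hE : IsLowerSet E)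
    (hT : Filt A (AddFactor A D Set.univ) T)
    (hext : ∀ l ∉ E, ExtOneVanishes A (D l) T) :
    ∃ (T' : ModuleCat.{0} A) (f : T →ₗ[A] T'), Function.Injective f ∧
      Filt A (fun Z _ _ => Nonempty (PlainFactor A Λ D E Z)) (T' ⧸ LinearMap.range f) ∧
      ∀ l, ExtOneVanishes A (D l) T' := by
  induction E, hE using isLowerSet_induction generalizing T with
  | empty =>
    refine ⟨.of A T, .id, Function.injective_id, ?_, fun l => hext l (Set.notMem_empty l)⟩
    rw [LinearMap.range_id]
    exact .zero _
  | insert E μ hE hμ hE' ih =>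
    obtain ⟨T₁, n, f, g, hf, hfg, hg, hT₁⟩ := h.exists_extension_of_insert hE hμ hE' hT hext
    obtain ⟨_, _⟩ := exists_module_isScalarTower R A T₁
    have hT₁' : Filt A (AddFactor A D Set.univ) T₁ := .of_exact hf hfg hg hT <| .of_factor
      ⟨μ, trivial, n, .id, .id, rfl⟩
    obtain ⟨T₂, f', hf', hT₂, hext₂⟩ := ih hT₁' hT₁
    refine ⟨T₂, f' ∘ₗ f, hf'.comp hf, ?_, hext₂⟩
    rw [LinearMap.range_comp]
    refine .quotient_map hf' (LinearMap.exact_map_mkQ_range f') (Submodule.mkQ_surjective _)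
      (.of_equiv ((Submodule.quotEquivOfEq _ _ hfg.linearMap_ker_eq.symm).trans
        (g.quotKerEquivOfSurjective hg)).symm <|
        .pi fun _ => .of_factor ⟨μ, Set.mem_insert μ E, .refl A (D μ)⟩)
      (hT₂.mono fun _ _ _ ⟨c⟩ => ⟨c.lam, Set.mem_insert_of_mem μ c.mem, c.iso⟩)

end SplitQH

end UniversalExtension

section Factors

variable {R : Type} [CommRing R] {A : Type} [Ring A] [Algebra R A] {Λ : Type}
  {D N : Λ → Type} [∀ l, AddCommGroup (D l)] [∀ l, Module R (D l)] [∀ l, Module A (D l)]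
  [∀ l, IsScalarTower R A (D l)] [∀ l, AddCommGroup (N l)] [∀ l, Module R (N l)]
  [∀ l, Module A (N l)] [∀ l, IsScalarTower R A (N l)] {S S' : Set Λ}
  {X Y : Type} [AddCommGroup X] [Module A X] [AddCommGroup Y] [Module A Y]

lemma nonempty_tensorFactor_mono (hS : S ⊆ S') (h : Nonempty (TensorFactor R A Λ D S X)) :
    Nonempty (TensorFactor R A Λ D S' X) :=
  h.map fun c => ⟨c.lam, hS c.mem, c.U, c.fin, c.proj, c.iso⟩

lemma nonempty_tensorFactor_of_equiv {l : Λ} (hl : l ∈ S) (e : X ≃ₗ[A] D l) :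
    Nonempty (TensorFactor R A Λ D S X) :=
  ⟨l, hl, ModuleCat.of R R, inferInstanceAs (Module.Finite R R),
    inferInstanceAs (Module.Projective R R),
    e.trans (TensorProduct.AlgebraTensorModule.rid R A (D l)).symm⟩

omit [∀ l, Module R (D l)] [∀ l, IsScalarTower R A (D l)] in
lemma HomTensorFactor.nonempty_tensorFactor {M : Type} [AddCommGroup M] [Module R M] [Module A M]
    [IsScalarTower R A M] (hM : ∀ l, InAdd R R (D l →ₗ[A] M))
    (h : HomTensorFactor R (A := A) D N M S X) : Nonempty (TensorFactor R A Λ N S X) := by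
  obtain ⟨l, hl, ⟨e⟩⟩ := h
  exact ⟨l, hl, ModuleCat.of R (D l →ₗ[A] M), (hM l).finite, (hM l).projective, e⟩

omit [∀ l, Module R (D l)] [∀ l, IsScalarTower R A (D l)] in
lemma Filt.finite_of_addFactor (hD : ∀ l, Module.Finite A (D l))
    (h : Filt A (AddFactor A D S) X) : Module.Finite A X := by
  induction h with
  | zero => infer_instance
  | step _ hip hp _ hZ ih =>
    obtain ⟨l, -, hl⟩ := hZ
    have := hl.finite
    exact .of_exact hip hp

lemma InFilt.of_filt (hD : ∀ l, Module.Finite A (D l))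
    (h : Filt A (fun Z _ _ => Nonempty (TensorFactor R A Λ D S Z)) X) : InFilt R A Λ D S X :=
  ⟨(h.mono fun _ _ _ c => c.some.addFactor).finite_of_addFactor hD,
    h.exists_chain fun _ _ _ _ _ _ e ⟨c⟩ => ⟨c.lam, c.mem, c.U, c.fin, c.proj, e.symm.trans c.iso⟩⟩

omit [∀ l, Module R (D l)] [∀ l, IsScalarTower R A (D l)] in
lemma PlainFactor.addFactor (c : PlainFactor A Λ D S X) : AddFactor A D S X :=
  ⟨c.lam, c.mem, (InAdd.refl A _).of_equiv c.iso.symm⟩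

omit [∀ l, Module R (D l)] [∀ l, IsScalarTower R A (D l)] in
lemma InFiltPlain.of_filt (hD : ∀ l, Module.Finite A (D l))
    (h : Filt A (fun Z _ _ => Nonempty (PlainFactor A Λ D S Z)) X) : InFiltPlain A Λ D S X :=
  ⟨(h.mono fun _ _ _ c => c.some.addFactor).finite_of_addFactor hD,
    h.exists_chain fun _ _ _ _ _ _ e ⟨c⟩ => ⟨c.lam, c.mem, e.symm.trans c.iso⟩⟩

omit [∀ l, Module R (D l)] [∀ l, IsScalarTower R A (D l)] in
lemma IsOrthogonalSystem.extOneVanishes_of_filt (hN : IsOrthogonalSystem R A D N)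
    (hX : Filt A (AddFactor A D S) X) (hY : Filt A (AddFactor A N S') Y) :
    ExtOneVanishes A X Y :=
  hX.addFactor_extOneVanishes_left fun l _ =>
    hY.addFactor_extOneVanishes_right fun m _ => hN.ext l m

end Factors

section TiltingModules

variable {R : Type} [CommRing R] {A : Type} [Ring A] [Algebra R A]

lemma bijective_compRight {M X Y : Type*} [AddCommGroup M] [Module A M] [AddCommGroup X]
    [Module R X] [Module A X] [IsScalarTower R A X] [AddCommGroup Y] [Module R Y] [Module A Y]
    [IsScalarTower R A Y] {f : X →ₗ[A] Y} (hf : Function.Injective f)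
    (h : ∀ φ : M →ₗ[A] Y ⧸ LinearMap.range f, φ = 0) :
    Function.Bijective (LinearMap.compRight R f : (M →ₗ[A] X) →ₗ[R] M →ₗ[A] Y) := by
  refine ⟨fun φ ψ hφψ => (LinearMap.cancel_left hf).1 hφψ, fun φ => ?_⟩
  refine exists_comp_eq_of_range_le hf ?_
  rw [← Submodule.ker_mkQ (LinearMap.range f), LinearMap.range_le_ker_iff]
  exact h _

variable {Λ : Type} [Finite Λ] [PartialOrder Λ]
  {D N : Λ → Type} [∀ l, AddCommGroup (D l)] [∀ l, Module R (D l)] [∀ l, Module A (D l)]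
  [∀ l, IsScalarTower R A (D l)] [∀ l, AddCommGroup (N l)] [∀ l, Module R (N l)]
  [∀ l, Module A (N l)] [∀ l, IsScalarTower R A (N l)]

lemma SplitQH.exists_surjective_costandard (h : SplitQH R A Λ D)
    (hN : IsOrthogonalSystem R A D N) {l : Λ} {T : Type} [AddCommGroup T] [Module A T]
    {f : D l →ₗ[A] T} (hf : Function.Injective f)
    (hX : Filt A (AddFactor A D (Set.Iio l)) (T ⧸ LinearMap.range f))
    (hT : ∀ m, ExtOneVanishes A (D m) T) :
    ∃ g : T →ₗ[A] N l, Function.Surjective g ∧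
      Filt A (fun Z _ _ => Nonempty (TensorFactor R A Λ N (Set.Iio l) Z)) (LinearMap.ker g) := by
  obtain ⟨_, _⟩ := exists_module_isScalarTower R A T
  have hT' : Filt A (AddFactor A D (insert l (Set.Iio l))) T :=
    .of_exact hf (LinearMap.exact_map_mkQ_range f) (Submodule.mkQ_surjective _)
      (.of_factor ⟨l, Set.mem_insert l _, .refl A (D l)⟩)
      (hX.mono_addFactor (Set.subset_insert l _))
  have hI : IsLowerSet (insert l (Set.Iio l)) := Set.Iio_insert (a := l) ▸ isLowerSet_Iic l
  obtain ⟨g, hg, hker⟩ := hN.exists_surjective_of_filt h.isStandardSystem hT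
    (isLowerSet_Iio l) (lt_irrefl l) hI hT'
  obtain ⟨e⟩ := h.endIso l
  let q : (D l →ₗ[A] T) ≃ₗ[R] R := (LinearEquiv.ofBijective _ <| bijective_compRight (R := R) hf <|
    hX.addFactor_hom_eq_zero_right fun m hm =>
      h.hom_eq_zero l m (not_le_of_gt hm)).symm.trans e.toLinearEquiv
  let u : N l ⊗[R] (D l →ₗ[A] T) ≃ₗ[A] N l :=
    (TensorProduct.AlgebraTensorModule.congr (.refl A (N l)) q).trans
      (TensorProduct.AlgebraTensorModule.rid R A (N l))
  refine ⟨u.toLinearMap ∘ₗ g, u.surjective.comp hg, ?_⟩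
  rw [LinearEquiv.ker_comp]
  exact hker.mono fun _ _ _ => HomTensorFactor.nonempty_tensorFactor fun m =>
    h.inAdd_hom (h.inAdd_of_filt hT') m fun k _ => hT k

end TiltingModules

theorem partial_tilting_exists_with_approximations_general
    {R : Type} [CommRing R] {A : Type} [Ring A] [Algebra R A] {Λ : Type} [Finite Λ] [PartialOrder Λ]
    {D N : Λ → Type} [∀ l, AddCommGroup (D l)] [∀ l, Module R (D l)] [∀ l, Module A (D l)]
    [∀ l, IsScalarTower R A (D l)] [∀ l, AddCommGroup (N l)] [∀ l, Module R (N l)]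
    [∀ l, Module A (N l)] [∀ l, IsScalarTower R A (N l)]
    (h : SplitQH R A Λ D) (hN : IsOrthogonalSystem R A D N) (l : Λ) :
    ∃ T : ModuleCat.{0} A,
      (InFilt R A Λ D Set.univ T ∧ InFilt R A Λ N Set.univ T) ∧
      (∃ f : D l →ₗ[A] T, Function.Injective f ∧
        InFiltPlain A Λ D {m | m < l} (T ⧸ LinearMap.range f) ∧
        (∀ (C : Type) [AddCommGroup C] [Module A C], InFilt R A Λ N Set.univ C →
          ∀ φ : D l →ₗ[A] C, ∃ ψ : T →ₗ[A] C, ψ ∘ₗ f = φ)) ∧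
      (∃ g : T →ₗ[A] N l, Function.Surjective g ∧
        InFilt R A Λ N {m | m < l} (LinearMap.ker g) ∧
        (∀ (C : Type) [AddCommGroup C] [Module A C], InFilt R A Λ D Set.univ C →
          ∀ φ : C →ₗ[A] N l, ∃ ψ : C →ₗ[A] T, g ∘ₗ ψ = φ)) := by
  have hDfin := h.deltaFinA
  have hNfin (m : Λ) : Module.Finite A (N m) :=
    have := hN.finite h.isStandardSystem m
    .of_restrictScalars_finite R A (N m)
  obtain ⟨T, f, hf, hX, hT⟩ := h.exists_extension (isLowerSet_Iio l)
    (.of_factor ⟨l, trivial, .refl A (D l)⟩) (fun m hm => h.extOneVanishes m l hm)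
  have hX' := hX.mono fun _ _ _ c => c.some.addFactor
  obtain ⟨g, hg, hY⟩ := h.exists_surjective_costandard hN hf hX' hT
  have hY' := hY.mono fun _ _ _ c => c.some.addFactor
  have hfp := LinearMap.exact_map_mkQ_range f
  have hp := (LinearMap.range f).mkQ_surjective
  have hig := LinearMap.exact_subtype_ker_map g
  have hi := (LinearMap.ker g).subtype_injective
  refine ⟨T, ⟨.of_filt hDfin ?_, .of_filt hNfin ?_⟩, ⟨f, hf, .of_filt hDfin hX, ?_⟩,
    g, hg, .of_filt hNfin hY, ?_⟩
  · exact .of_exact hf hfp hp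
      (.of_factor (nonempty_tensorFactor_of_equiv (Set.mem_univ l) (.refl A (D l))))
      (hX.mono fun _ _ _ ⟨c⟩ => nonempty_tensorFactor_of_equiv (Set.mem_univ c.lam) c.iso)
  · exact .step hi hig hg
      (hY.mono fun _ _ _ => nonempty_tensorFactor_mono (Set.subset_univ _))
      (nonempty_tensorFactor_of_equiv (Set.mem_univ l) (.refl A (N l)))
  · exact fun C _ _ hC => (hN.extOneVanishes_of_filt hX' hC.filt).exists_extend hf hfp hp
  · exact fun C _ _ hC => (hN.extOneVanishes_of_filt hC.filt hY').exists_lift hi hig hg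

noncomputable section

/-- For each `λ ∈ Λ` there is a partial tilting module `T(λ)` with exact
sequences `0 → Δ(λ) → T(λ) → X(λ) → 0` and `0 → Y(λ) → T(λ) → ∇(λ) → 0`, where `X(λ)` is
filtered by standard modules `Δ(μ)`, `μ < λ`, and `Y(λ)` is filtered by modules
`∇(μ) ⊗_R U`, `μ < λ`, `U ∈ R`-proj. Moreover the inclusion `Δ(λ) → T(λ)` is a left
`F(∇̃)`-approximation and the surjection `T(λ) → ∇(λ)` is a right `F(Δ̃)`-approximation. -/
theorem partial_tilting_exists_with_approximations
    (R : Type) [CommRing R] [IsNoetherianRing R]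
    (A : Type) [Ring A] [Algebra R A]
    (Λ : Type) [Fintype Λ] [PartialOrder Λ]
    (Δ : Λ → Type) [∀ l, AddCommGroup (Δ l)] [∀ l, Module R (Δ l)]
    [∀ l, Module A (Δ l)] [∀ l, IsScalarTower R A (Δ l)]
    (Nb : Λ → Type) [∀ l, AddCommGroup (Nb l)] [∀ l, Module R (Nb l)]
    [∀ l, Module A (Nb l)] [∀ l, IsScalarTower R A (Nb l)]
    (h : SplitQH R A Λ Δ) (hc : IsCostandard R A Λ Δ Nb) (l : Λ) :
    ∃ T : ModuleCat.{0} A,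
      -- `T(λ)` is partial tilting
      (InFilt R A Λ Δ Set.univ T ∧ InFilt R A Λ Nb Set.univ T) ∧
      -- `0 → Δ(λ) → T(λ) → X(λ) → 0` with `X(λ) ∈ F(Δ_{μ<λ})`, and the inclusion is a
      -- left `F(∇̃)`-approximation of `Δ(λ)`
      (∃ f : Δ l →ₗ[A] T, Function.Injective f ∧
        InFiltPlain A Λ Δ {m | m < l} ((T : Type) ⧸ LinearMap.range f) ∧
        (∀ (C : Type) [AddCommGroup C] [Module A C], InFilt R A Λ Nb Set.univ C →
          ∀ φ : Δ l →ₗ[A] C, ∃ ψ : (T : Type) →ₗ[A] C, ψ.comp f = φ)) ∧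
      -- `0 → Y(λ) → T(λ) → ∇(λ) → 0` with `Y(λ) ∈ F(∇̃_{μ<λ})`, and the projection is a
      -- right `F(Δ̃)`-approximation of `∇(λ)`
      (∃ g : (T : Type) →ₗ[A] Nb l, Function.Surjective g ∧
        InFilt R A Λ Nb {m | m < l} ↥(LinearMap.ker g) ∧
        (∀ (C : Type) [AddCommGroup C] [Module A C], InFilt R A Λ Δ Set.univ C →
          ∀ φ : C →ₗ[A] Nb l, ∃ ψ : C →ₗ[A] T, g.comp ψ = φ)) :=
  partial_tilting_exists_with_approximations_general h hc.isOrthogonalSystem l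

end
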